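/- arXiv:1601.07663 — 11 statements merged into one kernel-verified Lean document; each statement's English description precedes it below -/
import Mathlib

section
/- Let u and v be nonzero vectors of V = F^n (n ≥ 1). There exist an invertible F-linear map g : V → V and a scalar λ ∈ F \ {0} such that φ(g(x), g(y)) = λ·φ(x, y) for all x, y ∈ V and g(v) = u, if and only if the conditions φ(v, v) = 0 and φ(u, u) = 0 are equivalent. In other words, the orbits of the unitary similarity group GU(n, q) on the nonzero vectors of V are exactly the set of singular vectors and the set of anisotropic vectors. -/
/-!
If `g` is a similarity with multiplier `lam` and `g v = u`, then `φ u u = lam * φ v v`, which gives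
one direction. For the converse, the basic tool is the quasi-reflection
`x ↦ x + (φ v w)⁻¹ φ(x, w) w` with `w = u - v`: when `φ v v = φ u u` and `φ v w ≠ 0` it is an
isometry taking `v` to `u` (`exists_isometry_of_ne`).

* Anisotropic vectors: surjectivity of the norm `μ ↦ μ ^ (q₀ + 1)` onto the nonzero fixed elements
  lets `v` be rescaled so that `φ v v = φ u u`. If then `φ v u = φ v v`, a further rescaling by some
  `ζ ≠ 1` of norm one makes the quasi-reflection available.
* Singular vectors: if `φ v u ≠ 0`, a quasi-reflection maps `v` to `u`. Otherwise, some vector is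
  orthogonal to neither `v` nor `u`, and by surjectivity of the trace, adding a multiple of `v` to
  it makes it singular; two quasi-reflections through this vector map `v` to `u`.
-/

/-- Surjectivity of the norm: a nonzero element fixed by `x ↦ x ^ q₀` has the form `μ * μ ^ q₀`. -/
lemma exists_mul_pow_eq {F : Type*} [Field F] [Fintype F] {q₀ : ℕ} (h2 : 2 ≤ q₀)
    (hF : Fintype.card F = q₀ ^ 2) (c : F) (hc : c ≠ 0) (hcq : c ^ q₀ = c) :
    ∃ m : F, m ≠ 0 ∧ m * m ^ q₀ = c := by
  classical
  obtain ⟨r, rfl⟩ : ∃ r, q₀ = r + 1 := ⟨q₀ - 1, by omega⟩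
  have hr : 0 < r := by omega
  obtain ⟨g, hg⟩ := IsCyclic.exists_generator (α := Fˣ)
  have hord : orderOf g = r * (r + 2) := by
    rw [orderOf_eq_card_of_forall_mem_zpowers hg, Nat.card_eq_fintype_card, Fintype.card_units, hF]
    have : (r + 1) ^ 2 = r * (r + 2) + 1 := by ring
    omega
  obtain ⟨k, hk⟩ := (Submonoid.mem_powers_iff _ _).1
    ((mem_powers_iff_mem_zpowers (x := g)).2 (hg (Units.mk0 c hc)))
  have h1 : (Units.mk0 c hc) ^ r = 1 := by
    ext
    have : c ^ r * c = 1 * c := by rw [← pow_succ, hcq, one_mul]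
    simpa using mul_right_cancel₀ hc this
  rw [← hk, ← pow_mul, ← orderOf_dvd_iff_pow_eq_one, hord, mul_comm r] at h1
  obtain ⟨j, rfl⟩ := Nat.dvd_of_mul_dvd_mul_right hr h1
  refine ⟨(g ^ j : Fˣ), Units.ne_zero _, ?_⟩
  have := congrArg Units.val hk
  rw [Units.val_mk0] at this
  rw [← this]
  push_cast
  ring

/-- A generator of `Fˣ` raised to the power `q₀ - 1` is an element of norm one other than `1`. -/
lemma exists_norm_one_ne_one {F : Type*} [Field F] [Fintype F] {q₀ : ℕ} (h2 : 2 ≤ q₀)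
    (hF : Fintype.card F = q₀ ^ 2) : ∃ z : F, z ≠ 1 ∧ z * z ^ q₀ = 1 := by
  classical
  obtain ⟨r, rfl⟩ : ∃ r, q₀ = r + 1 := ⟨q₀ - 1, by omega⟩
  have hr : 0 < r := by omega
  obtain ⟨g, hg⟩ := IsCyclic.exists_generator (α := Fˣ)
  have hord : orderOf g = r * (r + 2) := by
    rw [orderOf_eq_card_of_forall_mem_zpowers hg, Nat.card_eq_fintype_card, Fintype.card_units, hF]
    have : (r + 1) ^ 2 = r * (r + 2) + 1 := by ring
    omega
  refine ⟨(g ^ r : Fˣ), fun h => ?_, ?_⟩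
  · have h1 : g ^ r = 1 := Units.ext (by simpa using h)
    rw [← orderOf_dvd_iff_pow_eq_one, hord] at h1
    have := Nat.le_of_dvd hr h1
    nlinarith
  · have h1 : g ^ (r * (r + 2)) = 1 := by rw [← hord, pow_orderOf_eq_one]
    have := congrArg Units.val h1
    push_cast at this ⊢
    rw [← this]
    ring

/-- Surjectivity of the trace `s ↦ s + s ^ q₀` onto the elements fixed by `x ↦ x ^ q₀`. -/
lemma exists_trace_eq {F : Type*} [Field F] [Fintype F] {q₀ : ℕ} (h2 : 2 ≤ q₀)
    (hF : Fintype.card F = q₀ ^ 2) (hadd : ∀ x y : F, (x + y) ^ q₀ = x ^ q₀ + y ^ q₀)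
    (t : F) (ht : t ^ q₀ = t) : ∃ s : F, s + s ^ q₀ = t := by
  have hqq : ∀ x : F, (x ^ q₀) ^ q₀ = x := fun x => by
    rw [← pow_mul, ← sq, ← hF, FiniteField.pow_card]
  -- An element of nonzero trace: `1` in odd characteristic, a norm-one element in characteristic 2.
  have he : ∃ e : F, e + e ^ q₀ ≠ 0 := by
    by_contra! h
    obtain ⟨z, hz1, hz⟩ := exists_norm_one_ne_one h2 hF
    have h1 := h 1
    rw [one_pow] at h1
    have h3 := h z
    apply hz1
    have : (z - 1) * (z - 1) = 0 := by linear_combination z * h3 - hz - z * h1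
    exact sub_eq_zero.1 (mul_self_eq_zero.1 this)
  obtain ⟨e, he⟩ := he
  refine ⟨t / (e + e ^ q₀) * e, ?_⟩
  rw [mul_pow, div_pow, hadd, hqq, ht, add_comm (e ^ q₀) e, ← mul_add, div_mul_cancel₀ _ he]

/-- If `φ v v = φ u u` and `φ v u ≠ φ v v`, the quasi-reflection along `u - v` is an isometry
mapping `v` to `u`. -/
lemma exists_isometry_of_ne {F : Type*} [Field F] {q₀ n : ℕ}
    (φ : (Fin n → F) → (Fin n → F) → F)
    (haddl : ∀ u v w : Fin n → F, φ (u + v) w = φ u w + φ v w)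
    (haddr : ∀ u v w : Fin n → F, φ u (v + w) = φ u v + φ u w)
    (hsmull : ∀ (a : F) (u v : Fin n → F), φ (a • u) v = a * φ u v)
    (hsmulr : ∀ (a : F) (u v : Fin n → F), φ u (a • v) = a ^ q₀ * φ u v)
    (hconj : ∀ u v : Fin n → F, φ v u = (φ u v) ^ q₀)
    (hnondeg : ∀ u : Fin n → F, (∀ v, φ u v = 0) → u = 0)
    (u v : Fin n → F) (huv : φ v v = φ u u) (hne : φ v u ≠ φ v v) :
    ∃ g : (Fin n → F) ≃ₗ[F] (Fin n → F), (∀ x y, φ (g x) (g y) = φ x y) ∧ g v = u := by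
  obtain ⟨w, hw⟩ : ∃ w, u = v + w := ⟨u - v, by abel⟩
  have hvw : φ v w ≠ 0 := by
    intro h
    apply hne
    rw [hw, haddr, h, add_zero]
  have hwv : φ w v ≠ 0 := by
    rw [hconj]
    exact pow_ne_zero _ hvw
  have hsum : φ v w + φ w v + φ w w = 0 := by
    rw [hw, haddl, haddr, haddr] at huv
    linear_combination -huv
  let f : (Fin n → F) →ₗ[F] (Fin n → F) :=
    { toFun := fun x => x + ((φ v w)⁻¹ * φ x w) • w
      map_add' := fun x y => by
        rw [haddl, mul_add, add_smul]
        abel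
      map_smul' := fun a x => by
        rw [hsmull, RingHom.id_apply, smul_add, smul_smul, mul_left_comm] }
  have hf : ∀ x, f x = x + ((φ v w)⁻¹ * φ x w) • w := fun _ => rfl
  have hiso : ∀ x y, φ (f x) (f y) = φ x y := by
    intro x y
    rw [hf, hf, haddl, haddr, haddr, hsmull, hsmull, hsmulr, hsmulr, mul_pow, inv_pow, ← hconj,
      ← hconj]
    field_simp
    linear_combination (φ x w * φ w y) * hsum
  have hinj : Function.Injective f := by
    rw [injective_iff_map_eq_zero]
    intro x hx
    refine hnondeg x fun y => ?_
    rw [← hiso, hx]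
    simpa using hsmull 0 0 (f y)
  refine ⟨LinearEquiv.ofInjectiveEndo f hinj, fun x y => ?_, ?_⟩
  · simpa using hiso x y
  · rw [LinearEquiv.coe_ofInjectiveEndo, hf, inv_mul_cancel₀ hvw, one_smul, hw]

/-- The orbits of the unitary similarity group `GU(n,q)` on nonzero vectors are the
set of singular vectors and the set of anisotropic vectors: for nonzero `u, v`,
there is an invertible linear map `g` preserving the unitary form `φ` up to a nonzero
scalar with `g v = u` iff (`φ v v = 0` ↔ `φ u u = 0`). -/
theorem stmt_0 (p l : ℕ) (hp : p.Prime) (hl : 0 < l)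
    (q₀ : ℕ) (hq₀ : q₀ = p ^ l)
    (F : Type*) [Field F] [Fintype F] (hF : Fintype.card F = q₀ ^ 2)
    (n : ℕ) (hn : 1 ≤ n)
    (φ : (Fin n → F) → (Fin n → F) → F)
    (haddl : ∀ u v w : Fin n → F, φ (u + v) w = φ u w + φ v w)
    (haddr : ∀ u v w : Fin n → F, φ u (v + w) = φ u v + φ u w)
    (hsmull : ∀ (a : F) (u v : Fin n → F), φ (a • u) v = a * φ u v)
    (hsmulr : ∀ (a : F) (u v : Fin n → F), φ u (a • v) = a ^ q₀ * φ u v)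
    (hconj : ∀ u v : Fin n → F, φ v u = (φ u v) ^ q₀)
    (hnondeg : ∀ u : Fin n → F, (∀ v, φ u v = 0) → u = 0)
    (u v : Fin n → F) (hu : u ≠ 0) (hv : v ≠ 0) :
    (∃ (g : (Fin n → F) ≃ₗ[F] (Fin n → F)) (lam : F), lam ≠ 0 ∧
        (∀ x y, φ (g x) (g y) = lam * φ x y) ∧ g v = u) ↔
      (φ v v = 0 ↔ φ u u = 0) := by
  have h2 : 2 ≤ q₀ := by
    rw [hq₀]
    exact hp.two_le.trans (Nat.le_self_pow hl.ne' p)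
  have : Fact p.Prime := ⟨hp⟩
  have : CharP F p := charP_of_card_eq_prime_pow (f := l * 2)
    (by rw [hF, hq₀, pow_mul])
  have hadd : ∀ x y : F, (x + y) ^ q₀ = x ^ q₀ + y ^ q₀ := fun x y => by
    rw [hq₀]
    exact add_pow_char_pow x y p l
  have hq0 : q₀ ≠ 0 := by omega
  have hsymm : ∀ x y, φ x y = 0 → φ y x = 0 := fun x y h => by
    rw [hconj, h, zero_pow hq0]
  have key := exists_isometry_of_ne φ haddl haddr hsmull hsmulr hconj hnondeg
  constructor
  · rintro ⟨g, lam, hlam, hg, rfl⟩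
    rw [hg]
    simp [hlam]
  · intro h
    by_cases hvv : φ v v = 0
    · have huu := h.1 hvv
      -- Singular vectors lie in one orbit of the isometry group.
      suffices ∃ g : (Fin n → F) ≃ₗ[F] (Fin n → F), (∀ x y, φ (g x) (g y) = φ x y) ∧ g v = u by
        obtain ⟨g, hg, hgv⟩ := this
        exact ⟨g, 1, one_ne_zero, fun x y => by rw [hg, one_mul], hgv⟩
      by_cases hvu : φ v u = 0
      · have huv := hsymm _ _ hvu
        have hex : ∀ x, x ≠ 0 → ∃ y, φ x y ≠ 0 := fun x hx => by
          by_contra! hc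
          exact hx (hnondeg x hc)
        -- A vector space is not the union of the two hyperplanes `v^⊥` and `u^⊥`.
        obtain ⟨z, hvz, huz⟩ : ∃ z, φ v z ≠ 0 ∧ φ u z ≠ 0 := by
          obtain ⟨a, ha⟩ := hex v hv
          obtain ⟨b, hb⟩ := hex u hu
          by_cases hua : φ u a = 0
          · by_cases hvb : φ v b = 0
            · exact ⟨a + b, by rwa [haddr, hvb, add_zero], by rwa [haddr, hua, zero_add]⟩
            · exact ⟨b, hvb, hb⟩
          · exact ⟨a, ha, hua⟩
        obtain ⟨s, hs⟩ := exists_trace_eq h2 hF hadd (φ z z) (hconj z z).symm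
        have hzv : φ z v ≠ 0 := fun h => hvz (hsymm _ _ h)
        -- `z + a • v` is singular when `a * φ v z` has trace `-φ z z`.
        obtain ⟨a, ha⟩ : ∃ a, a * φ v z = -s := ⟨-s / φ v z, div_mul_cancel₀ _ hvz⟩
        have hneg : (-s) ^ q₀ = -s ^ q₀ := by
          have := hadd s (-s)
          rw [add_neg_cancel, zero_pow hq0] at this
          linear_combination -this
        have ha' : a ^ q₀ * φ z v = -s ^ q₀ := by
          rw [hconj v z, ← mul_pow, ha, hneg]
        have hzz : φ (z + a • v) (z + a • v) = 0 := by
          rw [haddl, haddr, haddr, hsmull, hsmull, hsmulr, hsmulr, hvv]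
          linear_combination ha + ha' - hs
        obtain ⟨g₁, hg₁, hg₁v⟩ := key (z + a • v) v (by rw [hvv, hzz]) (by
          rwa [hvv, haddr, hsmulr, hvv, mul_zero, add_zero])
        obtain ⟨g₂, hg₂, hg₂v⟩ := key u (z + a • v) (by rw [huu, hzz]) (by
          rw [hzz, haddl, hsmull, hvu, mul_zero, add_zero]
          exact fun h => huz (hsymm _ _ h))
        exact ⟨g₁.trans g₂, fun x y => by simp [hg₁, hg₂], by simp [hg₁v, hg₂v]⟩
      · exact key u v (by rw [hvv, huu]) (by rwa [hvv])
    · have huu : φ u u ≠ 0 := fun h' => hvv (h.2 h')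
      have hN : ∀ (a : F) x y, φ (a • x) (a • y) = (a * a ^ q₀) * φ x y := fun a x y => by
        rw [hsmull, hsmulr, mul_assoc]
      -- It suffices to rescale `v` so that the quasi-reflection lemma applies.
      suffices ∃ m : F, m ≠ 0 ∧ φ (m • v) (m • v) = φ u u ∧ φ (m • v) u ≠ φ (m • v) (m • v) by
        obtain ⟨m, hm, h1, h3⟩ := this
        obtain ⟨g, hg, hgv⟩ := key u (m • v) h1 h3
        refine ⟨(LinearEquiv.smulOfNeZero F (Fin n → F) m hm).trans g, m * m ^ q₀,
          mul_ne_zero hm (pow_ne_zero _ hm), fun x y => ?_, ?_⟩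
        · simp only [LinearEquiv.trans_apply, LinearEquiv.smulOfNeZero_apply, hg, hN]
        · simpa only [LinearEquiv.trans_apply, LinearEquiv.smulOfNeZero_apply] using hgv
      obtain ⟨m, hm, hmc⟩ := exists_mul_pow_eq h2 hF (φ u u / φ v v) (div_ne_zero huu hvv) (by
        rw [div_pow, ← hconj, ← hconj])
      have h1 : φ (m • v) (m • v) = φ u u := by rw [hN, hmc, div_mul_cancel₀ _ hvv]
      by_cases h3 : φ (m • v) u = φ u u
      · obtain ⟨z, hz1, hz⟩ := exists_norm_one_ne_one h2 hF
        have hz0 : z ≠ 0 := by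
          rintro rfl
          simp at hz
        have h4 : φ ((z * m) • v) ((z * m) • v) = φ u u := by
          rw [mul_smul, hN, hz, one_mul, h1]
        refine ⟨z * m, mul_ne_zero hz0 hm, h4, ?_⟩
        rw [h4, mul_smul, hsmull, h3]
        exact fun h => hz1 (mul_right_cancel₀ huu (h.trans (one_mul _).symm))
      · exact ⟨m, hm, h1, by rwa [h1]⟩
end

section
/- Let v be a nonzero vector of V = F^n. If either φ(v, v) ≠ 0 and n ≥ 2, or φ(v, v) = 0 and n ≥ 3, then the values φ(u, u), as u ranges over the vectors of V orthogonal to v (i.e., those u with φ(u, v) = 0), form exactly the subfield F₀; that is, {φ(u, u) : u ∈ F^n, φ(u, v) = 0} = {x ∈ F : x^{q₀} = x}. -/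
/-!
The diagonal values `φ u u` lie in `F₀` by conjugate symmetry. Conversely, the norm
`a ↦ a ^ (q₀ + 1)` maps `F` onto `F₀` (`exists_pow_succ_eq`), and
`φ (a • u) (a • u) = a ^ (q₀ + 1) * φ u u`, so a single `u ⟂ v` with `φ u u ≠ 0` produces every
element of `F₀`.

Such a `u` exists, for otherwise polarization together with the nonvanishing of the trace
`b ↦ b + b ^ q₀` (`exists_add_pow_ne_zero`) shows that `φ` vanishes identically on `v^⊥`. Choose `z`
with `φ z v ≠ 0`, taking `z = v` when `v` is not isotropic. The dimension hypothesis gives a nonzero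
`u` orthogonal to both `v` and `z`; since the whole space is `v^⊥ + F z`, this `u` lies in the
radical of `φ`, contradicting nondegeneracy.
-/

/-- The multiplicative group of the field with `q₀ ^ 2` elements has a generator. -/
lemma exists_generator (F : Type*) [Field F] [Fintype F] (q₀ : ℕ)
    (hF : Fintype.card F = q₀ ^ 2) :
    ∃ g : Fˣ, (∀ x : Fˣ, ∃ k : ℕ, g ^ k = x) ∧ orderOf g = q₀ ^ 2 - 1 := by
  classical
  obtain ⟨g, hg⟩ := IsCyclic.exists_generator (α := Fˣ)
  refine ⟨g, fun x => ?_, ?_⟩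
  · exact (Submonoid.mem_powers_iff _ _).1 (mem_powers_iff_mem_zpowers.2 (hg x))
  · rw [orderOf_eq_card_of_forall_mem_zpowers hg, Nat.card_eq_fintype_card, Fintype.card_units, hF]

/-- Surjectivity of the norm from `F` onto its subfield `F₀`. -/
lemma exists_pow_succ_eq (F : Type*) [Field F] [Fintype F] (q₀ : ℕ) (hq : 2 ≤ q₀)
    (hF : Fintype.card F = q₀ ^ 2) (x : F) (hx : x ^ q₀ = x) :
    ∃ a : F, a ^ (q₀ + 1) = x := by
  by_cases h0 : x = 0
  · exact ⟨0, by simp [h0]⟩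
  obtain ⟨g, hg, ho⟩ := exists_generator F q₀ hF
  obtain ⟨k, hk⟩ := hg (Units.mk0 x h0)
  obtain ⟨m, rfl⟩ : ∃ m, q₀ = m + 1 := ⟨q₀ - 1, by omega⟩
  have h1 : (Units.mk0 x h0) ^ m = 1 := by
    ext
    rw [pow_succ] at hx
    simpa using mul_right_cancel₀ h0 (hx.trans (one_mul x).symm)
  rw [← hk, ← pow_mul] at h1
  have h2 := orderOf_dvd_of_pow_eq_one h1
  have h3 : (m + 1) ^ 2 - 1 = (m + 1 + 1) * m := by
    have : (m + 1) ^ 2 = (m + 1 + 1) * m + 1 := by ring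
    omega
  rw [ho, h3] at h2
  obtain ⟨j, rfl⟩ := Nat.dvd_of_mul_dvd_mul_right (by omega) h2
  refine ⟨((g ^ j : Fˣ) : F), ?_⟩
  have h4 := congrArg Units.val hk
  rw [← Units.val_pow_eq_pow_val, ← pow_mul, mul_comm j, h4, Units.val_mk0]

/-- The trace from `F` to `F₀` is not identically zero. -/
lemma exists_add_pow_ne_zero (F : Type*) [Field F] [Fintype F] (q₀ : ℕ) (hq : 2 ≤ q₀)
    (hF : Fintype.card F = q₀ ^ 2) : ∃ b : F, b + b ^ q₀ ≠ 0 := by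
  by_contra! h
  -- `b = 1` forces characteristic two, so that every element would be fixed by the `q₀`-th power.
  have h2 : (1 : F) + 1 = 0 := by simpa using h 1
  obtain ⟨g, -, ho⟩ := exists_generator F q₀ hF
  obtain ⟨m, rfl⟩ : ∃ m, q₀ = m + 1 := ⟨q₀ - 1, by omega⟩
  have h1 : g ^ m = 1 := by
    ext
    have h3 : (g : F) ^ m * g = 1 * g := by
      linear_combination h (g : F) - (g : F) * h2
    simpa using mul_right_cancel₀ g.ne_zero h3
  have h4 := Nat.le_of_dvd (by omega) (orderOf_dvd_of_pow_eq_one h1)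
  rw [ho] at h4
  have : (m + 1) ^ 2 = m * m + 2 * m + 1 := by ring
  have : 0 ≤ m * m := Nat.zero_le _
  omega

/-- Let `v ≠ 0`. If either `φ v v ≠ 0` and `n ≥ 2`, or `φ v v = 0` and `n ≥ 3`, then
the values `φ u u` for `u` orthogonal to `v` form exactly the subfield
`F₀ = {x : F | x ^ q₀ = x}`. -/
theorem stmt_2 (p l : ℕ) (hp : p.Prime) (hl : 0 < l)
    (q₀ : ℕ) (hq₀ : q₀ = p ^ l)
    (F : Type*) [Field F] [Fintype F] (hF : Fintype.card F = q₀ ^ 2)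
    (n : ℕ)
    (φ : (Fin n → F) → (Fin n → F) → F)
    (haddl : ∀ u v w : Fin n → F, φ (u + v) w = φ u w + φ v w)
    (haddr : ∀ u v w : Fin n → F, φ u (v + w) = φ u v + φ u w)
    (hsmull : ∀ (a : F) (u v : Fin n → F), φ (a • u) v = a * φ u v)
    (hsmulr : ∀ (a : F) (u v : Fin n → F), φ u (a • v) = a ^ q₀ * φ u v)
    (hconj : ∀ u v : Fin n → F, φ v u = (φ u v) ^ q₀)
    (hnondeg : ∀ u : Fin n → F, (∀ v, φ u v = 0) → u = 0)
    (v : Fin n → F) (hv : v ≠ 0)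
    (hcase : (φ v v ≠ 0 ∧ 2 ≤ n) ∨ (φ v v = 0 ∧ 3 ≤ n)) :
    {x : F | ∃ u : Fin n → F, φ u v = 0 ∧ φ u u = x} = {x : F | x ^ q₀ = x} := by
  have hq : 2 ≤ q₀ := by
    rw [hq₀]
    exact hp.two_le.trans (Nat.le_self_pow hl.ne' p)
  have hq0 : q₀ ≠ 0 := by omega
  suffices hex : ∃ u, φ u v = 0 ∧ φ u u ≠ 0 by
    obtain ⟨u, huv, huu⟩ := hex
    ext x
    constructor
    · rintro ⟨w, -, rfl⟩
      exact (hconj w w).symm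
    · intro hx
      obtain ⟨a, ha⟩ := exists_pow_succ_eq F q₀ hq hF (x / φ u u) (by
        rw [div_pow, ← hconj u u, show x ^ q₀ = x from hx])
      refine ⟨a • u, by rw [hsmull, huv, mul_zero], ?_⟩
      rw [hsmull, hsmulr, ← mul_assoc, ← pow_succ', ha, div_mul_cancel₀ _ huu]
  by_contra! hiso
  -- Polarization: the form vanishes on `v^⊥`.
  have hperp : ∀ u w, φ u v = 0 → φ w v = 0 → φ u w = 0 := by
    intro u w hu hw
    by_contra hne
    obtain ⟨b, hb⟩ := exists_add_pow_ne_zero F q₀ hq hF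
    apply hb
    set a := b / φ u w with ha
    have hau : φ (a • u) w = b := by rw [hsmull, ha, div_mul_cancel₀ _ hne]
    have hau0 : φ (a • u) v = 0 := by rw [hsmull, hu, mul_zero]
    have h := hiso (a • u + w) (by rw [haddl, hau0, hw, add_zero])
    rw [haddl, haddr, haddr, hiso _ hau0, hiso _ hw, hconj (a • u) w, hau] at h
    simpa using h
  obtain ⟨z, hz, u, hu0, huv, huz⟩ :
      ∃ z, φ z v ≠ 0 ∧ ∃ u, u ≠ 0 ∧ φ u v = 0 ∧ φ u z = 0 := by
    let L : (Fin n → F) → (Fin n → F) →ₗ[F] F := fun y =>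
      { toFun := fun u => φ u y
        map_add' := fun s t => haddl s t y
        map_smul' := fun a s => hsmull a s y }
    rcases hcase with ⟨hvv, hn⟩ | ⟨hvv, hn⟩
    · have hker : LinearMap.ker (L v) ≠ ⊥ :=
        LinearMap.ker_ne_bot_of_finrank_lt (by simp; omega)
      obtain ⟨u, hu, hu0⟩ := (Submodule.ne_bot_iff _).1 hker
      exact ⟨v, hvv, u, hu0, hu, hu⟩
    · obtain ⟨z, hz⟩ : ∃ z, φ z v ≠ 0 := by
        by_contra! hall
        exact hv (hnondeg v fun w => by rw [hconj w v, hall w, zero_pow hq0])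
      have hker : LinearMap.ker ((L v).prod (L z)) ≠ ⊥ :=
        LinearMap.ker_ne_bot_of_finrank_lt (by simp; omega)
      obtain ⟨u, hu, hu0⟩ := (Submodule.ne_bot_iff _).1 hker
      have hu' : ((L v u, L z u) : F × F) = 0 := hu
      exact ⟨z, hz, u, hu0, congrArg Prod.fst hu', congrArg Prod.snd hu'⟩
  apply hu0
  apply hnondeg
  intro w
  -- Split `w` along `v^⊥ + F z`.
  set c := φ w v / φ z v with hc
  have hw : φ (w + (-c) • z) v = 0 := by
    rw [haddl, hsmull, hc]
    field_simp
    ring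
  have h := hperp u _ huv hw
  rwa [haddr, hsmulr, huz, mul_zero, add_zero] at h
end

section
/- Suppose n ≥ 2 and let v ∈ F^n be a nonzero vector with φ(v, v) ≠ 0. Then there exist nonzero vectors w, u ∈ F^n with φ(w, w) = 0, φ(u, u) = 0, and v = w + u. In other words, every anisotropic vector is the sum of two nonzero singular vectors. -/
/-!
Write `σ a = a ^ q₀`, `c = φ v v`, and look for `w = a • v + x` with `x` orthogonal to `v`, so that
`u = (1 - a) • v - x`. Then `φ w w = a σ(a) c + φ x x` and `φ u u = (1 - a) σ(1 - a) c + φ x x`,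
and the two values agree when `a + σ a = 1`. Such an `a` exists because the trace
`a ↦ a + σ a` is a nonzero polynomial map of degree `q₀ < |F|` (`exists_trace_one`).

It remains to find `x` orthogonal to `v` with `φ x x = - a σ(a) c`. The hyperplane orthogonal to `v`
is nonzero since `n ≥ 2`, and nondegenerate since `v` is anisotropic; by polarization it contains
an anisotropic vector, and surjectivity of the norm `F → F₀` (`exists_unitary_norm_eq`) allows rescaling
that vector to the required length. Both `w` and `u` are nonzero because their components along `v`
are `a` and `1 - a`, elements of trace one.
-/

/-- Surjectivity of the norm onto the nonzero elements of the fixed field: in the cyclic group `Fˣ`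
of order `(q₀ - 1) (q₀ + 1)`, the elements killed by `q₀ - 1` are the `(q₀ + 1)`-th powers. -/
theorem exists_unitary_norm_eq {F : Type*} [Field F] [Fintype F] {q₀ : ℕ} (hq : 2 ≤ q₀)
    (hF : Fintype.card F = q₀ ^ 2) {b : F} (hb : b ≠ 0) (hfix : b ^ q₀ = b) :
    ∃ y : F, y * y ^ q₀ = b := by
  obtain ⟨m, rfl⟩ : ∃ m, q₀ = m + 1 := ⟨q₀ - 1, by omega⟩
  obtain ⟨g, hg⟩ := IsCyclic.exists_generator (α := Fˣ)
  obtain ⟨k, hk⟩ := (mem_powers_iff_mem_zpowers (G := Fˣ)).2 (hg (Units.mk0 b hb))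
  have hk' : g ^ k = Units.mk0 b hb := hk
  have hord : orderOf g = m * (m + 2) := by
    rw [orderOf_eq_card_of_forall_mem_zpowers hg, Nat.card_units, Nat.card_eq_fintype_card, hF]
    have : (m + 1) ^ 2 = m * (m + 2) + 1 := by ring
    omega
  have hbm : b ^ m = 1 := by
    rw [pow_succ] at hfix
    exact mul_right_cancel₀ hb (by rw [hfix, one_mul])
  have h1 : g ^ (m * k) = 1 := by
    rw [mul_comm, pow_mul, hk']
    ext
    simpa using hbm
  have hdvd := orderOf_dvd_of_pow_eq_one h1
  rw [hord] at hdvd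
  obtain ⟨j, rfl⟩ := Nat.dvd_of_mul_dvd_mul_left (by omega) hdvd
  refine ⟨((g ^ j : Fˣ) : F), ?_⟩
  have h2 := congrArg (fun z : Fˣ => (z : F)) hk'
  simp only [Units.val_pow_eq_pow_val, Units.val_mk0] at h2
  rw [← h2, Units.val_pow_eq_pow_val]
  ring

theorem exists_trace_one {F : Type*} [Field F] [Fintype F] {q₀ : ℕ} (hq : 2 ≤ q₀)
    (hF : Fintype.card F = q₀ ^ 2) (hadd : ∀ a b : F, (a + b) ^ q₀ = a ^ q₀ + b ^ q₀) :
    ∃ a : F, a + a ^ q₀ = 1 := by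
  have hσσ : ∀ a : F, (a ^ q₀) ^ q₀ = a := fun a => by
    rw [← pow_mul, ← sq, ← hF, FiniteField.pow_card]
  obtain ⟨a, ha⟩ : ∃ a : F, a + a ^ q₀ ≠ 0 := by
    by_contra! h
    have hdeg : (Polynomial.X + Polynomial.X ^ q₀ : Polynomial F).natDegree = q₀ := by
      rw [Polynomial.natDegree_add_eq_right_of_natDegree_lt] <;> simp
      omega
    have h0 : (Polynomial.X + Polynomial.X ^ q₀ : Polynomial F) = 0 := by
      refine Polynomial.eq_zero_of_natDegree_lt_card_of_eval_eq_zero _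
        (f := (id : F → F)) Function.injective_id (fun i => by simpa using h i) ?_
      rw [hdeg, hF]
      nlinarith
    rw [h0, Polynomial.natDegree_zero] at hdeg
    omega
  -- The trace `t = a + σ a` lies in the fixed field, so `a / t` has trace one.
  have ht : (a + a ^ q₀) ^ q₀ = a + a ^ q₀ := by rw [hadd, hσσ, add_comm]
  refine ⟨a / (a + a ^ q₀), ?_⟩
  rw [div_pow, ht, ← add_div, div_self ha]

/-- For `n ≥ 2`, every anisotropic vector of a unitary space is the sum of two
nonzero singular vectors. -/
theorem stmt_3 (p l : ℕ) (hp : p.Prime) (hl : 0 < l)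
    (q₀ : ℕ) (hq₀ : q₀ = p ^ l)
    (F : Type*) [Field F] [Fintype F] (hF : Fintype.card F = q₀ ^ 2)
    (n : ℕ) (hn : 2 ≤ n)
    (φ : (Fin n → F) → (Fin n → F) → F)
    (haddl : ∀ u v w : Fin n → F, φ (u + v) w = φ u w + φ v w)
    (haddr : ∀ u v w : Fin n → F, φ u (v + w) = φ u v + φ u w)
    (hsmull : ∀ (a : F) (u v : Fin n → F), φ (a • u) v = a * φ u v)
    (hsmulr : ∀ (a : F) (u v : Fin n → F), φ u (a • v) = a ^ q₀ * φ u v)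
    (hconj : ∀ u v : Fin n → F, φ v u = (φ u v) ^ q₀)
    (hnondeg : ∀ u : Fin n → F, (∀ v, φ u v = 0) → u = 0)
    (v : Fin n → F) (hv : v ≠ 0) (hvv : φ v v ≠ 0) :
    ∃ w u : Fin n → F, w ≠ 0 ∧ u ≠ 0 ∧ φ w w = 0 ∧ φ u u = 0 ∧ v = w + u := by
  have hq : 2 ≤ q₀ := by
    rw [hq₀]
    exact hp.two_le.trans (Nat.le_self_pow (Nat.pos_iff_ne_zero.1 hl) p)
  -- Additivity of `σ` can be read off from the form itself, as `φ v v ≠ 0`.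
  have hadd : ∀ a b : F, (a + b) ^ q₀ = a ^ q₀ + b ^ q₀ := fun a b => by
    have h := haddr v (a • v) (b • v)
    rw [← add_smul, hsmulr, hsmulr, hsmulr, ← add_mul] at h
    exact mul_right_cancel₀ hvv h
  obtain ⟨a, ha⟩ := exists_trace_one hq hF hadd
  have h0q : (0 : F) ^ q₀ = 0 := zero_pow (by omega)
  have ha0 : a ≠ 0 := by
    rintro rfl
    simp [h0q] at ha
  have hσa : a ^ q₀ = 1 - a := by linear_combination ha
  have hσσ : (a ^ q₀) ^ q₀ = a := by rw [← pow_mul, ← sq, ← hF, FiniteField.pow_card]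
  have ha1 : 1 - a ≠ 0 := hσa ▸ pow_ne_zero _ ha0
  have hσ1a : (1 - a) ^ q₀ = a := by rw [← hσa, hσσ]
  have hσneg : ∀ b : F, (-b) ^ q₀ = -b ^ q₀ := fun b => by
    have h := hadd b (-b)
    rw [add_neg_cancel, h0q] at h
    linear_combination -h
  have hnegl : ∀ y z, φ (-y) z = -φ y z := fun y z => by
    simpa using hsmull (-1) y z
  have hnegr : ∀ y z, φ y (-z) = -φ y z := fun y z => by
    rw [← neg_one_smul F z, hsmulr, hσneg, one_pow, neg_one_mul]
  have hperp : ∀ x, φ x v = 0 → φ v x = 0 := fun x hx => by rw [hconj x v, hx, h0q]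
  obtain ⟨x, hxv, hx0⟩ : ∃ x, φ x v = 0 ∧ x ≠ 0 := by
    let f : (Fin n → F) →ₗ[F] F :=
      { toFun := fun y => φ y v
        map_add' := fun y z => haddl y z v
        map_smul' := fun b y => hsmull b y v }
    have hker : LinearMap.ker f ≠ ⊥ := LinearMap.ker_ne_bot_of_finrank_lt (by simp; omega)
    obtain ⟨x, hx, hx0⟩ := (Submodule.ne_bot_iff _).1 hker
    exact ⟨x, hx, hx0⟩
  obtain ⟨y, hyv, hyy⟩ : ∃ y, φ y v = 0 ∧ φ y y ≠ 0 := by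
    by_contra! hall
    refine hx0 (hnondeg x fun z => ?_)
    -- If the hyperplane were totally singular, polarization would make it totally isotropic.
    have hiso : ∀ z, φ z v = 0 → φ x z = 0 := fun z hz => by
      by_contra hne
      -- With `b = a / φ x z`, the sum `φ (b • x) z + φ z (b • x)` is the trace of `a`.
      have hb : φ ((a / φ x z) • x) z = a := by rw [hsmull, div_mul_cancel₀ _ hne]
      have hs : φ ((a / φ x z) • x + z) v = 0 := by
        rw [haddl, hsmull, hxv, hz, mul_zero, add_zero]
      have h := hall _ hs
      rw [haddl, haddr, haddr, hb, hconj _ z, hb, hall z hz,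
        hall ((a / φ x z) • x) (by rw [hsmull, hxv, mul_zero])] at h
      refine one_ne_zero (α := F) ?_
      linear_combination h - ha
    have hproj : φ (z + (-(φ z v / φ v v)) • v) v = 0 := by
      rw [haddl, hsmull]
      field_simp
      ring
    have h := hiso _ hproj
    rwa [haddr, hsmulr, hxv, mul_zero, add_zero] at h
  -- Rescale `y` so that its length becomes `- a σ(a) c`.
  obtain ⟨d, hd⟩ : ∃ d : F, d * d ^ q₀ = -(a * (1 - a) * φ v v) / φ y y := by
    refine exists_unitary_norm_eq hq hF
      (div_ne_zero (neg_ne_zero.2 (mul_ne_zero (mul_ne_zero ha0 ha1) hvv)) hyy) ?_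
    rw [div_pow, hσneg, mul_pow, mul_pow, hσa, hσ1a, ← hconj, ← hconj]
    ring
  have hdv : φ (d • y) v = 0 := by rw [hsmull, hyv, mul_zero]
  have hvd := hperp _ hdv
  have hdd : φ (d • y) (d • y) = -(a * (1 - a) * φ v v) := by
    rw [hsmull, hsmulr, ← mul_assoc, hd, div_mul_cancel₀ _ hyy]
  have hvw : φ (a • v + d • y) v = a * φ v v := by rw [haddl, hsmull, hdv, add_zero]
  have hvu : φ ((1 - a) • v + -(d • y)) v = (1 - a) * φ v v := by
    rw [haddl, hsmull, hnegl, hdv, neg_zero, add_zero]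
  have hzero : φ 0 v = 0 := by simpa using hsmull 0 v v
  refine ⟨a • v + d • y, (1 - a) • v + -(d • y), ?_, ?_, ?_, ?_, ?_⟩
  · intro h
    rw [h, hzero] at hvw
    exact mul_ne_zero ha0 hvv hvw.symm
  · intro h
    rw [h, hzero] at hvu
    exact mul_ne_zero ha1 hvv hvu.symm
  · rw [haddr, hsmulr, hvw, haddl, hsmull, hvd, hdd, hσa]
    ring
  · rw [haddr, hsmulr, hvu, haddl, hsmull, hnegr, hnegl, hnegr, hvd, hdd, hσ1a]
    ring
  · module
end

section
/- Suppose n ≥ 2, let v ∈ F^n be a nonzero vector with φ(v, v) = 0, and let μ be a nonzero element of the subfield F₀ (i.e., μ ≠ 0 and μ^{q₀} = μ). Then there exist vectors w, u ∈ F^n with φ(w, w) = μ, φ(u, u) = μ, and v = w + u. In other words, every nonzero singular vector is the sum of two vectors each of norm μ. -/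
/-!
Pick `x` with `φ x v = 1` (nondegeneracy and scaling) and look for `w = a • v + b • x`, `u = v - w`.
Since `v` is singular, `φ u u = φ w w - (b + b ^ q₀)`, so it suffices to choose `b ≠ 0` of trace
zero and then `a` with `φ w w = Tr (a * b ^ q₀) + b ^ (q₀ + 1) * φ x x = μ`. The latter is
possible because the trace `z ↦ z + z ^ q₀` maps onto the fixed field `F₀`. Both existence claims
come from the fact that `X ^ q₀ + c X` cannot vanish on all `q₀ ^ 2` elements of `F`
(`exists_pow_add_mul_ne_zero`).
-/

/-- A polynomial `X ^ q + c X` of degree `q ≥ 2` has too few roots to vanish on a field with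
`q ^ 2` elements. -/
lemma exists_pow_add_mul_ne_zero {F : Type*} [Field F] [Fintype F] {q : ℕ} (hq : 2 ≤ q)
    (hF : Fintype.card F = q ^ 2) (c : F) : ∃ e : F, e ^ q + c * e ≠ 0 := by
  by_contra! h
  have hdeg : (Polynomial.X ^ q + Polynomial.C c * Polynomial.X : Polynomial F).natDegree = q := by
    rw [Polynomial.natDegree_add_eq_left_of_natDegree_lt]
    · simp
    · refine lt_of_le_of_lt (Polynomial.natDegree_C_mul_le _ _) ?_
      simp
      omega
  have h0 := Polynomial.eq_zero_of_natDegree_lt_card_of_eval_eq_zero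
    (Polynomial.X ^ q + Polynomial.C c * Polynomial.X : Polynomial F)
    (f := (id : F → F)) Function.injective_id (fun i => by simpa using h i)
    (by rw [hdeg, hF]; nlinarith)
  rw [h0] at hdeg
  simp at hdeg
  omega

/-- For `n ≥ 2`, every nonzero singular vector of a unitary space is the sum of two
vectors each of norm `μ`, for any nonzero `μ` in the fixed subfield `F₀`. -/
theorem stmt_4 (p l : ℕ) (hp : p.Prime) (hl : 0 < l)
    (q₀ : ℕ) (hq₀ : q₀ = p ^ l)
    (F : Type*) [Field F] [Fintype F] (hF : Fintype.card F = q₀ ^ 2)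
    (n : ℕ) (hn : 2 ≤ n)
    (φ : (Fin n → F) → (Fin n → F) → F)
    (haddl : ∀ u v w : Fin n → F, φ (u + v) w = φ u w + φ v w)
    (haddr : ∀ u v w : Fin n → F, φ u (v + w) = φ u v + φ u w)
    (hsmull : ∀ (a : F) (u v : Fin n → F), φ (a • u) v = a * φ u v)
    (hsmulr : ∀ (a : F) (u v : Fin n → F), φ u (a • v) = a ^ q₀ * φ u v)
    (hconj : ∀ u v : Fin n → F, φ v u = (φ u v) ^ q₀)
    (hnondeg : ∀ u : Fin n → F, (∀ v, φ u v = 0) → u = 0)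
    (v : Fin n → F) (hv : v ≠ 0) (hvv : φ v v = 0)
    (μ : F) (hμ : μ ≠ 0) (hμ₀ : μ ^ q₀ = μ) :
    ∃ w u : Fin n → F, φ w w = μ ∧ φ u u = μ ∧ v = w + u := by
  have hq2 : 2 ≤ q₀ := by
    rw [hq₀]
    exact hp.two_le.trans (Nat.le_self_pow hl.ne' p)
  have : Fact p.Prime := ⟨hp⟩
  have : CharP F p := charP_of_card_eq_prime_pow (f := l * 2) (by
    rw [hF, hq₀, ← pow_mul])
  have frob_add : ∀ a b : F, (a + b) ^ q₀ = a ^ q₀ + b ^ q₀ := by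
    intro a b
    rw [hq₀]
    exact add_pow_char_pow a b p l
  have frob_sub : ∀ a b : F, (a - b) ^ q₀ = a ^ q₀ - b ^ q₀ := by
    intro a b
    rw [hq₀]
    exact sub_pow_char_pow a b l
  have frob_frob : ∀ a : F, (a ^ q₀) ^ q₀ = a := by
    intro a
    rw [← pow_mul, ← sq, ← hF]
    exact FiniteField.pow_card a
  obtain ⟨b, hb, hbq⟩ : ∃ b : F, b ≠ 0 ∧ b ^ q₀ = -b := by
    obtain ⟨e, he⟩ := exists_pow_add_mul_ne_zero hq2 hF (-1)
    refine ⟨e ^ q₀ + -1 * e, he, ?_⟩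
    rw [neg_one_mul, ← sub_eq_add_neg, frob_sub, frob_frob]
    ring
  have trace_surj : ∀ c : F, c ^ q₀ = c → ∃ d : F, d + d ^ q₀ = c := by
    intro c hc
    obtain ⟨e, he⟩ := exists_pow_add_mul_ne_zero hq2 hF 1
    rw [one_mul] at he
    have hs : (e ^ q₀ + e) ^ q₀ = e ^ q₀ + e := by
      rw [frob_add, frob_frob, add_comm]
    refine ⟨e * c / (e ^ q₀ + e), ?_⟩
    rw [div_pow, mul_pow, hs, hc]
    field_simp
    ring
  obtain ⟨x, hxv⟩ : ∃ x, φ x v = 1 := by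
    obtain ⟨y, hy⟩ : ∃ y, φ v y ≠ 0 := by
      by_contra! h
      exact hv (hnondeg v h)
    have hy' : φ y v ≠ 0 := by
      rw [hconj v y]
      exact pow_ne_zero _ hy
    exact ⟨(φ y v)⁻¹ • y, by rw [hsmull, inv_mul_cancel₀ hy']⟩
  have hvx : φ v x = 1 := by rw [hconj x v, hxv, one_pow]
  have hxx : φ x x ^ q₀ = φ x x := (hconj x x).symm
  obtain ⟨d, hd⟩ := trace_surj (μ + b * b * φ x x) (by
    rw [frob_add, mul_pow, mul_pow, hμ₀, hbq, hxx]
    ring)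
  -- `a = d / b ^ q₀`, rewritten with `b ^ q₀ = -b`.
  obtain ⟨a, ha⟩ : ∃ a : F, a * b = -d := ⟨-d / b, by field_simp⟩
  have haq : a ^ q₀ * b = d ^ q₀ := by
    have h := congrArg (· ^ q₀) ha
    have hneg : (-d) ^ q₀ = -d ^ q₀ := by
      have := frob_sub 0 d
      rwa [zero_sub, zero_pow (by omega), zero_sub] at this
    simp only [mul_pow, hbq, hneg] at h
    linear_combination -h
  have norm_comb : ∀ s t : F, φ (s • v + t • x) (s • v + t • x)
      = s * t ^ q₀ + t * s ^ q₀ + t * t ^ q₀ * φ x x := by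
    intro s t
    simp only [haddl, haddr, hsmull, hsmulr, hvv, hvx, hxv]
    ring
  refine ⟨a • v + b • x, (1 - a) • v + (0 - b) • x, ?_, ?_, ?_⟩
  · rw [norm_comb, hbq]
    linear_combination hd - ha + haq
  · rw [norm_comb, frob_sub, frob_sub, hbq, one_pow, zero_pow (by omega)]
    linear_combination hd - ha + haq
  · module
end

section
/- Let q be a prime power, k, m ≥ 2, and 1 ≤ s ≤ min(k, m). Let Y_s denote the set of k×m matrices over 𝔽_q of rank exactly s. Then Y_s ∪ (Y_s + Y_s) equals the set of all k×m matrices over 𝔽_q (i.e., every k×m matrix either has rank s or is the sum of two matrices of rank s) if and only if 2s ≥ min(k, m). -/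
/-!
If `min k m > 2 * s`, a matrix of full rank is neither of rank `s` nor, by subadditivity of the
rank, a sum of two matrices of rank `s`.

For the converse, matrices of equal rank are equivalent (`exists_eq_mul_mul_of_rank_eq`), so for
each `r ≤ min k m` with `r ≠ s` it suffices to exhibit two matrices of rank `s` whose sum has
rank `r`. Both `r < s` and `s < r ≤ 2 * s` come from one construction, valid over every field
(over `𝔽₂` diagonal matrices alone do not suffice): for `a ≤ c ≤ a + b` and `b < c` there are
matrices of ranks `a` and `b` with sum of rank `c` (`exists_rank_add`). The first is the partial
identity `∑_{j<a} E_{j,j}`; the second has a single `1` in each of the columns `c - b ≤ j < c`, on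
the diagonal if `a ≤ j` and just above it if `j < a`, so that the sum is unitriangular on its
leading `c × c` block. Take `(a, b, c) = (s, s, r)` if `s < r`. If `r < s` take
`(a, b, c) = (s, r, s)` and write the second matrix as the sum minus the first.
-/

open Pointwise

open Matrix

/-- Matrices of equal rank are equivalent: an isomorphism of the kernels extends to the domain,
and the resulting isomorphism of the ranges extends to the codomain. -/
lemma exists_eq_mul_mul_of_rank_eq {F : Type*} [Field F] {k m : ℕ}
    (M N : Matrix (Fin k) (Fin m) F) (h : M.rank = N.rank) :
    ∃ (P : Matrix (Fin k) (Fin k) F) (Q : Matrix (Fin m) (Fin m) F),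
      IsUnit P.det ∧ IsUnit Q.det ∧ N = P * M * Q := by
  have hker : Module.finrank F (LinearMap.ker M.mulVecLin)
      = Module.finrank F (LinearMap.ker N.mulVecLin) := by
    have h1 := LinearMap.finrank_range_add_finrank_ker M.mulVecLin
    have h2 := LinearMap.finrank_range_add_finrank_ker N.mulVecLin
    unfold Matrix.rank at h
    omega
  obtain ⟨e, he⟩ := Submodule.exists_linearEquiv_restrict_eq (LinearEquiv.ofFinrankEq _ _ hker)
  set g : (Fin m → F) →ₗ[F] (Fin k → F) := N.mulVecLin ∘ₗ e.toLinearMap with hg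
  have hle : LinearMap.ker M.mulVecLin ≤ LinearMap.ker g := by
    intro x hx
    have h1 := he ⟨x, hx⟩
    have h2 := (LinearEquiv.ofFinrankEq _ _ hker ⟨x, hx⟩).2
    rw [h1] at h2
    exact h2
  have hkg : LinearMap.ker M.mulVecLin = LinearMap.ker g := by
    apply Submodule.eq_of_le_of_finrank_eq hle
    have h1 := LinearMap.finrank_range_add_finrank_ker M.mulVecLin
    have h2 := LinearMap.finrank_range_add_finrank_ker g
    have h3 : LinearMap.range g = LinearMap.range N.mulVecLin :=
      LinearMap.range_comp_of_range_eq_top _ e.range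
    rw [h3] at h2
    unfold Matrix.rank at h
    omega
  let φ : LinearMap.range M.mulVecLin ≃ₗ[F] LinearMap.range g :=
    M.mulVecLin.quotKerEquivRange.symm ≪≫ₗ Submodule.quotEquivOfEq _ _ hkg ≪≫ₗ
      g.quotKerEquivRange
  obtain ⟨p, hp⟩ := Submodule.exists_linearEquiv_restrict_eq φ
  have hpM : ∀ x, p (M.mulVecLin x) = g x := by
    intro x
    have h1 := hp ⟨M.mulVecLin x, LinearMap.mem_range_self _ x⟩
    rw [← h1]
    have h2 : M.mulVecLin.quotKerEquivRange.symm ⟨M.mulVecLin x, LinearMap.mem_range_self _ x⟩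
        = Submodule.Quotient.mk x :=
      M.mulVecLin.quotKerEquivRange_symm_apply_image x _
    simp only [φ, LinearEquiv.trans_apply, h2, Submodule.quotEquivOfEq_mk]
    exact g.quotKerEquivRange_apply_mk x
  refine ⟨LinearMap.toMatrix' p.toLinearMap, LinearMap.toMatrix' e.symm.toLinearMap, ?_, ?_, ?_⟩
  · rw [LinearMap.det_toMatrix']
    exact p.isUnit_det'
  · rw [LinearMap.det_toMatrix']
    exact e.symm.isUnit_det'
  · apply Matrix.toLin'.injective
    rw [Matrix.toLin'_mul, Matrix.toLin'_mul, Matrix.toLin'_toMatrix', Matrix.toLin'_toMatrix']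
    ext1 x
    ext1
    have := hpM (e.symm (Pi.single x 1))
    simp only [hg, LinearMap.comp_apply, LinearEquiv.coe_coe, LinearEquiv.apply_symm_apply] at this
    simpa using this.symm

/-- A matrix supported on the columns `d ≤ j < d + n` has rank `n` as soon as some choice `ρ` of
`n` rows makes those columns unitriangular. -/
lemma rank_eq_of_unitriangular {F : Type*} [Field F] {k m : ℕ} (X : Matrix (Fin k) (Fin m) F)
    (d n : ℕ) (hn : d + n ≤ m) (hX : ∀ i j, ¬ (d ≤ j.val ∧ j.val < d + n) → X i j = 0)
    (ρ : Fin n → Fin k)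
    (hdiag : ∀ j : Fin n, X (ρ j) ⟨d + j, by omega⟩ = 1)
    (htri : ∀ i j : Fin n, j < i → X (ρ i) ⟨d + j, by omega⟩ = 0) : X.rank = n := by
  let γ : Fin n → Fin m := fun j => ⟨d + j, by omega⟩
  apply le_antisymm
  · rw [← Matrix.rank_transpose]
    refine (Matrix.rank_le_card_of_support_subset Xᵀ (Finset.univ.image γ) ?_).trans
      (Finset.card_image_le.trans (by simp))
    rw [Function.support_subset_iff']
    intro j hj
    ext i
    refine hX i j fun h => hj ?_
    simp only [Finset.coe_image, Finset.coe_univ, Set.image_univ, Set.mem_range]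
    exact ⟨⟨j - d, by omega⟩, Fin.ext (by simp [γ]; omega)⟩
  · have hdet : (X.submatrix ρ γ).det = 1 := by
      rw [Matrix.det_of_isUpperTriangular]
      · exact Finset.prod_eq_one fun j _ => hdiag j
      · intro i j hij
        exact htri i j hij
    have h1 : (X.submatrix ρ γ).rank = n := by
      rw [Matrix.rank_of_det_ne_zero (by rw [hdet]; exact one_ne_zero), Fintype.card_fin]
    exact h1.symm.le.trans (Matrix.rank_submatrix_le X ρ γ)

lemma exists_rank_add (F : Type*) [Field F] {k m a b c : ℕ} (hck : c ≤ k) (hcm : c ≤ m)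
    (hac : a ≤ c) (hbc : b < c) (hcab : c ≤ a + b) :
    ∃ A B : Matrix (Fin k) (Fin m) F, A.rank = a ∧ B.rank = b ∧ (A + B).rank = c := by
  let A : Matrix (Fin k) (Fin m) F := fun i j => if i.val = j.val ∧ j.val < a then 1 else 0
  let B : Matrix (Fin k) (Fin m) F := fun i j =>
    if c - b ≤ j.val ∧ j.val < c ∧ (if j.val < a then i.val + 1 = j.val else i.val = j.val)
    then 1 else 0
  refine ⟨A, B, ?_, ?_, ?_⟩
  · apply rank_eq_of_unitriangular A 0 a (by omega) _ (fun j => ⟨j, by omega⟩)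
    · intro j; simp [A]
    · intro i j hij
      simp only [A]; grind
    · intro i j h
      simp only [A]; grind
  · apply rank_eq_of_unitriangular B (c - b) b (by omega) _
      (fun j => ⟨if c - b + j < a then c - b + j - 1 else c - b + j, by split_ifs <;> omega⟩)
    · intro j; simp only [B]; grind
    · intro i j hij
      simp only [B]; grind
    · intro i j h
      simp only [B]; grind
  · apply rank_eq_of_unitriangular (A + B) 0 c (by omega) _ (fun j => ⟨j, by omega⟩)
    · intro j; rw [Matrix.add_apply]; simp only [A, B]; grind
    · intro i j hij
      rw [Matrix.add_apply]; simp only [A, B]; grind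
    · intro i j h
      rw [Matrix.add_apply]; simp only [A, B]; grind

lemma rank_add_le_rank_add_rank {F : Type*} [Field F] {k m : ℕ}
    (A B : Matrix (Fin k) (Fin m) F) : (A + B).rank ≤ A.rank + B.rank := by
  unfold Matrix.rank
  rw [Matrix.mulVecLin_add]
  exact (Submodule.finrank_mono (LinearMap.range_add_le _ _)).trans
    (Submodule.finrank_add_le_finrank_add_finrank _ _)

lemma rank_neg_eq {F : Type*} [Field F] {k m : ℕ}
    (A : Matrix (Fin k) (Fin m) F) : (-A).rank = A.rank := by
  have h : (-A).mulVecLin = -A.mulVecLin := by ext; simp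
  unfold Matrix.rank
  rw [h, LinearMap.range_neg]

/-- For `r ≠ s`, `r ≤ 2 * s`, some two matrices of rank `s` have a sum of rank `r`. -/
lemma exists_rank_eq_rank_add (F : Type*) [Field F] {k m s r : ℕ} (hsk : s ≤ k) (hsm : s ≤ m)
    (hrk : r ≤ k) (hrm : r ≤ m) (hrs : r ≠ s) (hr : r ≤ 2 * s) :
    ∃ A B : Matrix (Fin k) (Fin m) F, A.rank = s ∧ B.rank = s ∧ (A + B).rank = r := by
  rcases lt_or_gt_of_ne hrs with h | h
  · obtain ⟨A, B, hA, hB, hAB⟩ :=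
      exists_rank_add F (k := k) (m := m) (a := s) (b := r) (c := s) hsk hsm le_rfl h (by omega)
    exact ⟨A + B, -A, hAB, by rw [rank_neg_eq, hA], by rw [add_neg_cancel_comm, hB]⟩
  · exact exists_rank_add F hrk hrm h.le h (by omega)

/-- For `Y_s` the set of `k×m` matrices over `F_q` of rank exactly `s`
(`k, m ≥ 2`, `1 ≤ s ≤ min k m`), every `k×m` matrix lies in `Y_s ∪ (Y_s + Y_s)`
iff `2s ≥ min k m`. -/
theorem stmt_12 (F : Type*) [Field F] [Fintype F]
    (k m s : ℕ) (hk : 2 ≤ k) (hm : 2 ≤ m) (hs : 1 ≤ s) (hsm : s ≤ min k m)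
    (Y : Set (Matrix (Fin k) (Fin m) F))
    (hY : ∀ M : Matrix (Fin k) (Fin m) F, M ∈ Y ↔ M.rank = s) :
    Y ∪ (Y + Y) = Set.univ ↔ min k m ≤ 2 * s := by
  constructor
  · intro h
    -- `b = min k m - 1` is only a filler: the sum is a matrix of rank `min k m`.
    obtain ⟨A, B, -, -, hAB⟩ := exists_rank_add F (k := k) (m := m) (a := min k m)
      (b := min k m - 1) (c := min k m) (min_le_left _ _) (min_le_right _ _) le_rfl
      (by omega) (by omega)
    have hmem : A + B ∈ Y ∪ (Y + Y) := h ▸ Set.mem_univ _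
    rcases hmem with h1 | h1
    · rw [hY] at h1
      omega
    · obtain ⟨C, hC, D, hD, hCD⟩ := Set.mem_add.mp h1
      rw [hY] at hC hD
      have := rank_add_le_rank_add_rank C D
      rw [hCD] at this
      omega
  · intro h
    refine Set.eq_univ_of_forall fun M => ?_
    by_cases hM : M.rank = s
    · exact Or.inl ((hY M).mpr hM)
    · right
      have hrk := M.rank_le_height
      have hrm := M.rank_le_width
      obtain ⟨A, B, hA, hB, hAB⟩ := exists_rank_eq_rank_add F (k := k) (m := m) (s := s)
        (r := M.rank) (by omega) (by omega) hrk hrm hM (by omega)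
      obtain ⟨P, Q, hP, hQ, hPQ⟩ := exists_eq_mul_mul_of_rank_eq (A + B) M hAB
      have hrank : ∀ C : Matrix (Fin k) (Fin m) F, (P * C * Q).rank = C.rank := fun C => by
        rw [Matrix.rank_mul_eq_left_of_isUnit_det _ _ hQ,
          Matrix.rank_mul_eq_right_of_isUnit_det _ _ hP]
      refine Set.mem_add.mpr ⟨P * A * Q, (hY _).mpr ((hrank A).trans hA),
        P * B * Q, (hY _).mpr ((hrank B).trans hB), ?_⟩
      rw [hPQ, Matrix.mul_add, Matrix.add_mul]
end

section
/- Let v be a nonzero vector of K^n and u ∈ K^n. Then there exists an invertible n×n matrix g all of whose entries lie in the subfield k such that u = v·g (row vector times matrix), if and only if D_u = D_v, i.e., the k-span of the coordinates of u equals the k-span of the coordinates of v. In other words, the GL(n, q₀)-orbit of v consists exactly of the vectors u ∈ K^n with D_u = D_v. -/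
/-!
For `w ∈ K^n` let `φ_w : k^n → K` be the `k`-linear map `c ↦ ∑ i, c i • w i`; its range is `D_w`.
For a matrix `A` over `k`, the equation `u = v · A` says exactly that `φ_u = φ_v ∘ A`
(`linearCombination_comp_toLin`). If `A` is invertible, the two ranges agree. Conversely, two linear
maps with the same range on a finite-dimensional space have kernels of equal dimension, and hence
differ by an automorphism of the source (`exists_equiv_comp_eq_of_range_eq`).
-/

/-- Linear maps with the same range on a finite-dimensional space differ by an automorphism of the
source. With `s` a section of `f` over its range and `j` a linear map onto `ker f` restricting to
an isomorphism `ker g ≃ ker f`, the automorphism is `s ∘ g + j`. -/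
lemma exists_equiv_comp_eq_of_range_eq {k V W : Type*} [Field k] [AddCommGroup V] [Module k V]
    [FiniteDimensional k V] [AddCommGroup W] [Module k W] (f g : V →ₗ[k] W)
    (h : LinearMap.range g = LinearMap.range f) :
    ∃ e : V ≃ₗ[k] V, f ∘ₗ e.toLinearMap = g := by
  have hker : Module.finrank k (LinearMap.ker g) = Module.finrank k (LinearMap.ker f) := by
    have hf := f.finrank_range_add_finrank_ker
    have hg := g.finrank_range_add_finrank_ker
    rw [h] at hg
    omega
  obtain ⟨s, hs⟩ := f.rangeRestrict.exists_rightInverse_of_surjective f.range_rangeRestrict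
  obtain ⟨j, hj⟩ := (LinearEquiv.ofFinrankEq _ _ hker).toLinearMap.exists_extend
  let g' : V →ₗ[k] LinearMap.range f := g.codRestrict _ fun x => h ▸ LinearMap.mem_range_self g x
  let E : V →ₗ[k] V := s ∘ₗ g' + (LinearMap.ker f).subtype ∘ₗ j
  have hE : ∀ x, f (E x) = g x := by
    intro x
    have h1 : f (s (g' x)) = g x := congrArg Subtype.val (LinearMap.congr_fun hs (g' x))
    have h2 : f (j x : V) = 0 := (j x).2
    simp [E, h1, h2]
  have hinj : Function.Injective E := by
    rw [← LinearMap.ker_eq_bot, LinearMap.ker_eq_bot']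
    intro x hx
    have hgx : g x = 0 := by rw [← hE, hx, map_zero]
    have hg'x : g' x = 0 := Subtype.ext hgx
    have hjx : j x = 0 := by
      apply Subtype.ext
      simpa [E, hg'x] using hx
    have h3 := LinearMap.congr_fun hj ⟨x, hgx⟩
    have h4 : (LinearEquiv.ofFinrankEq _ _ hker) ⟨x, hgx⟩ = 0 := h3.symm.trans hjx
    exact congrArg Subtype.val ((LinearEquiv.map_eq_zero_iff _).1 h4)
  exact ⟨LinearEquiv.ofInjectiveEndo E hinj, LinearMap.ext hE⟩

lemma linearCombination_comp_toLin {K : Type*} [Field K] (k : Subfield K) {n : ℕ}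
    (v u : Fin n → K) (A : Matrix (Fin n) (Fin n) k) :
    u = Matrix.vecMul v (A.map (algebraMap k K)) ↔
      Fintype.linearCombination k v ∘ₗ Matrix.toLin' A = Fintype.linearCombination k u := by
  have key : ∀ j, (Fintype.linearCombination k v ∘ₗ Matrix.toLin' A) (Pi.single j 1) =
      Matrix.vecMul v (A.map (algebraMap k K)) j := by
    intro j
    simp [Fintype.linearCombination_apply, Matrix.vecMul, dotProduct, Algebra.smul_def, mul_comm]
  constructor
  · intro h
    refine LinearMap.pi_ext' fun j => LinearMap.ext_ring ?_
    simpa [h] using key j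
  · intro h
    funext j
    rw [← key, h]
    simp

/-- The `GL(n,q₀)`-orbit of a nonzero vector `v ∈ K^n` (where `K = F_{q₀^r}` and
`k` is its subfield of order `q₀`) consists exactly of the vectors `u` with
`D_u = D_v`, where `D_v` is the `k`-span of the coordinates of `v`. -/
theorem stmt_13 (p l r : ℕ) (hp : p.Prime) (hl : 0 < l) (hr : r.Prime)
    (q₀ : ℕ) (hq₀ : q₀ = p ^ l)
    (K : Type*) [Field K] [Fintype K] (hK : Fintype.card K = q₀ ^ r)
    (k : Subfield K) (hk : ∀ x : K, x ∈ k ↔ x ^ q₀ = x)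
    (n : ℕ) (hn : 0 < n)
    (v u : Fin n → K) (hv : v ≠ 0) :
    (∃ g : Matrix (Fin n) (Fin n) K, IsUnit g ∧ (∀ i j, g i j ∈ k) ∧
        u = Matrix.vecMul v g) ↔
      Submodule.span (↥k) (Set.range u) = Submodule.span (↥k) (Set.range v) := by
  rw [← Fintype.range_linearCombination, ← Fintype.range_linearCombination]
  constructor
  · rintro ⟨g, hg, hgk, hu⟩
    let A : Matrix (Fin n) (Fin n) k := Matrix.of fun i j => ⟨g i j, hgk i j⟩
    have hA : A.map (algebraMap k K) = g := rfl
    -- Invertibility descends from `K` to `k` because `det g` is the image of `det A`.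
    have hAu : IsUnit A := by
      rw [Matrix.isUnit_iff_isUnit_det, isUnit_iff_ne_zero] at hg ⊢
      intro h0
      apply hg
      have hdet := RingHom.map_det (algebraMap k K) A
      rw [h0, map_zero] at hdet
      exact hdet.symm
    rw [← hA, linearCombination_comp_toLin] at hu
    rw [← hu]
    apply LinearMap.range_comp_of_range_eq_top
    rw [LinearMap.range_eq_top]
    exact Matrix.mulVec_surjective_iff_isUnit.2 hAu
  · intro h
    obtain ⟨e, he⟩ := exists_equiv_comp_eq_of_range_eq _ _ h
    have hAu : IsUnit (LinearMap.toMatrix' e.toLinearMap) := by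
      rw [← Matrix.mulVec_surjective_iff_isUnit]
      intro y
      exact ⟨e.symm y, by simp [LinearMap.toMatrix'_mulVec]⟩
    refine ⟨(LinearMap.toMatrix' e.toLinearMap).map (algebraMap k K),
      hAu.map (algebraMap k K).mapMatrix, fun i j => Subtype.property _, ?_⟩
    rw [linearCombination_comp_toLin, Matrix.toLin'_toMatrix', he]
end

section
/- Regard K = 𝔽_{q₀^r} as a vector space of dimension r over its subfield k of order q₀, where r is prime. Let D be a k-subspace of K with D ≠ {0} and D ≠ K. Then {λ ∈ K : λ·d ∈ D for all d ∈ D} = k; that is, the set of scalars λ ∈ K with λD ⊆ D is exactly the subfield k. -/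
/-! Since `X ^ q₀ - X` is separable and divides `X ^ (q₀ ^ r) - X`, which splits in `K`, the
fixed subfield `k` has exactly `q₀` elements, so `[K : k] = r`. The scalars stabilising `D` form
a `k`-subalgebra of `K`, and as `r` is prime this subalgebra is either `k` or `K`. It is not `K`,
because then `D` would be a nonzero proper ideal of a field. -/

open Polynomial in
/-- The fixed field of `x ↦ x ^ q₀` in a field of order `q₀ ^ r` has the full number `q₀` of
elements. -/
lemma card_fixed_subfield (p l r : ℕ) (hp : p.Prime) (hl : 0 < l)
    (K : Type*) [Field K] [Fintype K] (hK : Fintype.card K = (p ^ l) ^ r)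
    (k : Subfield K) (hk : ∀ x : K, x ∈ k ↔ x ^ (p ^ l) = x) :
    Nat.card k = p ^ l := by
  have hq : 1 < p ^ l := Nat.one_lt_pow hl.ne' hp.one_lt
  have : Fact p.Prime := ⟨hp⟩
  have : CharP K p := charP_of_card_eq_prime_pow (f := l * r) (by rw [hK, pow_mul])
  have hP0 : (X ^ p ^ l - X : K[X]) ≠ 0 := FiniteField.X_pow_card_sub_X_ne_zero K hq
  have hdvd : (X ^ p ^ l - X : K[X]) ∣ X ^ Fintype.card K - X := by
    have := dvd_pow_pow_sub_self_of_dvd (r := (X : K[X])) (p := p ^ l) (one_dvd r)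
    rwa [pow_one, ← hK] at this
  have hsplitK : (X ^ Fintype.card K - X : K[X]).Splits := by
    rw [splits_iff_card_roots, FiniteField.roots_X_pow_card_sub_X,
      FiniteField.X_pow_card_sub_X_natDegree_eq K Fintype.one_lt_card]
    rfl
  have hsplit : (X ^ p ^ l - X : K[X]).Splits :=
    hsplitK.of_dvd (FiniteField.X_pow_card_sub_X_ne_zero K Fintype.one_lt_card) hdvd
  have hsep : (X ^ p ^ l - X : K[X]).Separable :=
    galois_poly_separable p _ (dvd_pow_self p hl.ne')
  have hcard := card_rootSet_eq_natDegree (K := K) hsep (by simpa using hsplit)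
  rw [FiniteField.X_pow_card_sub_X_natDegree_eq K hq, ← Nat.card_eq_fintype_card] at hcard
  rw [← hcard]
  refine Nat.card_congr (Equiv.subtypeEquivRight fun x => ?_)
  rw [hk, mem_rootSet]
  simp [hP0, sub_eq_zero]

/-- The `k`-subalgebra of scalars `x ∈ K` with `x D ⊆ D`. -/
def scalarStabilizer {K : Type*} [Field K] (k : Subfield K) (D : Submodule k K) :
    Subalgebra k K where
  carrier := {x : K | ∀ d ∈ D, x * d ∈ D}
  mul_mem' := fun ha hb d hd => by rw [mul_assoc]; exact ha _ (hb _ hd)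
  add_mem' := fun ha hb d hd => by rw [add_mul]; exact D.add_mem (ha _ hd) (hb _ hd)
  algebraMap_mem' := fun c d hd => by rw [← Algebra.smul_def]; exact D.smul_mem c hd

/-- If `D` is a `k`-subspace of `K = F_{q₀^r}` (`r` prime, `k` the subfield of
order `q₀`) with `D ≠ 0` and `D ≠ K`, then the set of scalars `λ ∈ K` with
`λD ⊆ D` is exactly the subfield `k`. -/
theorem stmt_14 (p l r : ℕ) (hp : p.Prime) (hl : 0 < l) (hr : r.Prime)
    (q₀ : ℕ) (hq₀ : q₀ = p ^ l)
    (K : Type*) [Field K] [Fintype K] (hK : Fintype.card K = q₀ ^ r)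
    (k : Subfield K) (hk : ∀ x : K, x ∈ k ↔ x ^ q₀ = x)
    (D : Submodule (↥k) K) (hD0 : D ≠ ⊥) (hDT : D ≠ ⊤) :
    {x : K | ∀ d ∈ D, x * d ∈ D} = (k : Set K) := by
  subst hq₀
  have hcard := card_fixed_subfield p l r hp hl K hK k hk
  have hrank : Module.finrank k K = r := by
    have h := Module.natCard_eq_pow_finrank (K := k) (V := K)
    rw [hcard, Nat.card_eq_fintype_card, hK] at h
    exact (Nat.pow_right_injective (Nat.one_lt_pow hl.ne' hp.one_lt) h).symm
  have := Subalgebra.isSimpleOrder_of_finrank_prime k K (hrank ▸ hr)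
  rcases eq_bot_or_eq_top (scalarStabilizer k D) with h | h
  · ext x
    change x ∈ scalarStabilizer k D ↔ x ∈ k
    rw [h, Algebra.mem_bot]
    exact ⟨fun ⟨c, hc⟩ => hc ▸ c.2, fun hx => ⟨⟨x, hx⟩, rfl⟩⟩
  · obtain ⟨d, hd, hd0⟩ := D.exists_mem_ne_zero_of_ne_bot hD0
    refine absurd (eq_top_iff.2 fun y _ => ?_) hDT
    have hy : y / d ∈ scalarStabilizer k D := h ▸ Algebra.mem_top
    simpa [hd0] using hy d hd
end

section
/- Let v, w ∈ K^n and suppose that D_w is a proper subspace of D_v (that is, the k-span of the coordinates of w is strictly contained in the k-span of the coordinates of v). Then there exist invertible n×n matrices g and h, all of whose entries lie in k, such that w = v·g + v·h (row vector times matrix). In particular, w is the sum of two elements of the GL(n, q₀)-orbit of v. -/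
/-!
Since `D_w ⊆ D_v`, there is a matrix `A` over `k` with `w = v A`; it is singular, because
`v = w A⁻¹` would give `D_v ⊆ D_w`. It therefore suffices that every singular square matrix over
a field is a sum of two invertible ones (`exists_isUnit_add_of_not_isUnit`).

By Gaussian elimination the matrix may be taken to be `diag d` with some `d i₀ = 0`. If `P` is the
matrix of the cyclic permutation `i ↦ i + 1`, then `diag d + P` is invertible: a kernel vector `x`
satisfies `x (i + 1) = - d i * x i`, so it vanishes at `i₀ + 1` and hence, going around the
cycle, everywhere. Thus `diag d = (diag d + P) + (-P)`.
-/

open Matrix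

open Fin.NatCast Fin.CommRing in
/-- A diagonal matrix with a zero diagonal entry is a sum of two invertible matrices. -/
theorem exists_isUnit_add_eq_diagonal {F : Type*} [Field F] {m : ℕ} (d : Fin (m + 1) → F)
    (i₀ : Fin (m + 1)) (h0 : d i₀ = 0) :
    ∃ g h : Matrix (Fin (m + 1)) (Fin (m + 1)) F, IsUnit g ∧ IsUnit h ∧ diagonal d = g + h := by
  set P : Matrix (Fin (m + 1)) (Fin (m + 1)) F := (Equiv.addRight (1 : Fin (m + 1))).permMatrix F
    with hP
  have hPv : ∀ x : Fin (m + 1) → F, ∀ i, (P *ᵥ x) i = x (i + 1) := by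
    intro x i
    rw [hP, Matrix.permMatrix_mulVec]
    rfl
  have hPu : IsUnit P := by
    rw [← Matrix.mulVec_injective_iff_isUnit]
    intro x y hxy
    funext i
    have := congrFun hxy (i - 1)
    simpa [hPv] using this
  refine ⟨diagonal d + P, -P, ?_, hPu.neg, by simp⟩
  rw [← Matrix.mulVec_injective_iff_isUnit]
  refine (injective_iff_map_eq_zero (diagonal d + P).mulVecLin).2 fun x hx => ?_
  have hrec : ∀ i, d i * x i + x (i + 1) = 0 := by
    intro i
    have := congrFun hx i
    simpa [Matrix.add_mulVec, hPv, Matrix.mulVec_diagonal] using this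
  have hz : ∀ t : ℕ, x (i₀ + 1 + (t : Fin (m + 1))) = 0 := by
    intro t
    induction t with
    | zero => simpa [h0] using hrec i₀
    | succ t ih =>
      have := hrec (i₀ + 1 + (t : Fin (m + 1)))
      rw [ih, mul_zero, zero_add] at this
      rw [Nat.cast_succ, ← add_assoc]
      exact this
  funext i
  have := hz (i - (i₀ + 1)).val
  rwa [Fin.cast_val_eq_self, add_sub_cancel] at this

/-- A singular square matrix over a field is a sum of two invertible matrices. -/
theorem exists_isUnit_add_of_not_isUnit {F : Type*} [Field F] {n : ℕ}
    (A : Matrix (Fin n) (Fin n) F) (hA : ¬ IsUnit A) :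
    ∃ g h : Matrix (Fin n) (Fin n) F, IsUnit g ∧ IsUnit h ∧ A = g + h := by
  obtain _ | m := n
  · exact absurd (isUnit_of_subsingleton A) hA
  obtain ⟨L, L', d, hd⟩ := Matrix.Pivot.exists_list_transvec_mul_diagonal_mul_list_transvec A
  have hu : ∀ L : List (TransvectionStruct (Fin (m + 1)) F),
      IsUnit (L.map TransvectionStruct.toMatrix).prod := fun L => by
    rw [Matrix.isUnit_iff_isUnit_det, TransvectionStruct.det_toMatrix_prod]
    exact isUnit_one
  have hex : ∃ i, d i = 0 := by
    by_contra! hne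
    refine hA (hd ▸ ((hu L).mul ?_).mul (hu L'))
    rw [Matrix.isUnit_iff_isUnit_det, Matrix.det_diagonal]
    exact (Finset.prod_ne_zero_iff.2 fun i _ => hne i).isUnit
  obtain ⟨i₀, h0⟩ := hex
  obtain ⟨g, h, hg, hh, he⟩ := exists_isUnit_add_eq_diagonal d i₀ h0
  refine ⟨_, _, ((hu L).mul hg).mul (hu L'), ((hu L).mul hh).mul (hu L'), ?_⟩
  rw [← add_mul, ← mul_add, ← he, hd]


/-- If `D_w` is a proper `k`-subspace of `D_v` (spans of coordinates inside
`K = F_{q₀^r}`), then `w` is the sum of two elements of the `GL(n,q₀)`-orbit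
of `v`: there are invertible matrices `g, h` with entries in `k` such that
`w = v·g + v·h`. -/
theorem stmt_15 (p l r : ℕ) (hp : p.Prime) (hl : 0 < l) (hr : r.Prime)
    (q₀ : ℕ) (hq₀ : q₀ = p ^ l)
    (K : Type*) [Field K] [Fintype K] (hK : Fintype.card K = q₀ ^ r)
    (k : Subfield K) (hk : ∀ x : K, x ∈ k ↔ x ^ q₀ = x)
    (n : ℕ) (hn : 0 < n)
    (v w : Fin n → K)
    (hlt : Submodule.span (↥k) (Set.range w) < Submodule.span (↥k) (Set.range v)) :
    ∃ g h : Matrix (Fin n) (Fin n) K, IsUnit g ∧ IsUnit h ∧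
      (∀ i j, g i j ∈ k) ∧ (∀ i j, h i j ∈ k) ∧
      w = Matrix.vecMul v g + Matrix.vecMul v h := by

  have hmem : ∀ j, ∃ c : Fin n → k, ∑ i, c i • v i = w j := fun j =>
    (Submodule.mem_span_range_iff_exists_fun k).1
      (hlt.le (Submodule.subset_span (Set.mem_range_self j)))
  choose c hc using hmem
  set A : Matrix (Fin n) (Fin n) k := Matrix.of fun i j => c j i with hAdef
  have hvA : v ᵥ* A.map k.subtype = w := by
    funext j
    rw [← hc j]
    simp [Matrix.vecMul, dotProduct, hAdef, Subfield.smul_def, mul_comm]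
  have hA : ¬ IsUnit A := by
    intro hu
    obtain ⟨B, hB⟩ := hu.exists_right_inv
    have hwB : w ᵥ* B.map k.subtype = v := by
      rw [← hvA, Matrix.vecMul_vecMul, ← Matrix.map_mul, hB]
      simp
    refine hlt.not_ge (Submodule.span_le.2 ?_)
    rintro _ ⟨j, rfl⟩
    refine (Submodule.mem_span_range_iff_exists_fun k).2 ⟨fun i => B i j, ?_⟩
    conv_rhs => rw [← hwB]
    simp [Matrix.vecMul, dotProduct, Subfield.smul_def, mul_comm]
  obtain ⟨g, h, hg, hh, he⟩ := exists_isUnit_add_of_not_isUnit A hA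
  refine ⟨g.map k.subtype, h.map k.subtype, hg.map k.subtype.mapMatrix,
    hh.map k.subtype.mapMatrix, fun i j => (g i j).2, fun i j => (h i j).2, ?_⟩
  rw [← hvA, he, ← Matrix.vecMul_add, Matrix.map_add _ (map_add _)]
end

section
/- Let w be a nonzero vector of K^n. Then the least positive integer ℓ such that w can be written as w = λ₁u₁ + ⋯ + λ_ℓu_ℓ with each λ_i ∈ K and each u_i ∈ K^n a nonzero vector all of whose coordinates lie in the subfield k, is equal to c(w) = dim_k D_w, the dimension over k of the k-span of the coordinates of w. Consequently, the Cayley graph of K^n with connection set {λu : λ ∈ K \ {0}, u ∈ k^n \ {0}} has diameter min(n, r). -/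
/-!
For `w = ∑ i, lam i • u i` with all `u i` over `k`, every coordinate of `w` is a `k`-combination of
the `lam i`, so `c(w)` is at most the number of terms (`finrank_span_range_le`). Conversely,
expanding the coordinates of `w` in a `k`-basis `b` of `D_w` gives `w = ∑ i, b i • u i` with `c(w)`
terms; no `u i` vanishes, since otherwise the `i`-th coordinate functional would be zero on a
spanning set of `D_w` (`exists_decomposition`).

For the diameter, a decomposition of `x - y` into `ℓ` terms is a walk of length at most `ℓ`
(`edist_le_of_sub_eq_sum`), while `c` is subadditive and at most `1` on the connection set, so the
length of a walk from `x` to `y` is at least `c(x - y)` (`finrank_span_sub_le_length`). Hence the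
distance is `c(x - y)`. This is at most `n` (the number of coordinates) and at most `[K : k]`, and
a vector containing `min n [K : k]` linearly independent coordinates attains the bound. Finally
`[K : k] = r`: as `Kˣ` is cyclic and `q₀ - 1 ∣ q₀ ^ r - 1`, exactly `q₀ - 1` units satisfy
`x ^ (q₀ - 1) = 1`, so `|k| = q₀` (`card_fixed_subfield`).
-/

section Helpers

variable {K : Type*} [Field K] [Fintype K] (k : Subfield K)

theorem card_fixed_subfield_s16 (q₀ r : ℕ) (hq : 1 < q₀)
    (hK : Fintype.card K = q₀ ^ r) (hk : ∀ x : K, x ∈ k ↔ x ^ q₀ = x) :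
    Nat.card k = q₀ := by
  have hmem : ∀ x : Kˣ, (x : K) ∈ k ↔ x ∈ (powMonoidHom (q₀ - 1) : Kˣ →* Kˣ).ker := by
    intro x
    rw [hk, MonoidHom.mem_ker, powMonoidHom_apply, ← Units.val_inj, Units.val_pow_eq_pow_val,
      Units.val_one]
    have hx : (x : K) ≠ 0 := x.ne_zero
    have e : (x : K) ^ q₀ = (x : K) ^ (q₀ - 1) * x := by
      rw [← pow_succ, Nat.sub_add_cancel hq.le]
    rw [e]
    exact mul_eq_right₀ hx
  have hcard : Nat.card (kˣ) = Nat.card (powMonoidHom (q₀ - 1) : Kˣ →* Kˣ).ker := by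
    refine Nat.card_congr (Equiv.ofBijective
      (fun y => ⟨Units.map k.subtype.toMonoidHom y, (hmem _).1 (y : k).2⟩) ⟨?_, ?_⟩)
    · intro a b hab
      have h1 := congrArg (fun z => ((z.1 : Kˣ) : K)) hab
      exact Units.ext (Subtype.ext h1)
    · rintro ⟨x, hx⟩
      have hx' := (hmem x).2 hx
      refine ⟨Units.mk0 ⟨(x : K), hx'⟩ ?_, ?_⟩
      · intro h0
        exact x.ne_zero (congrArg Subtype.val h0)
      · exact Subtype.ext (Units.ext rfl)
  rw [IsCyclic.card_powMonoidHom_ker, Nat.card_units, Nat.card_units,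
    Nat.card_eq_fintype_card (α := K), hK, Nat.gcd_eq_right (by simpa using Nat.sub_dvd_pow_sub_pow q₀ 1 r)] at hcard
  have : 0 < Nat.card k := Nat.card_pos
  omega

theorem finrank_fixed_subfield (q₀ r : ℕ) (hq : 1 < q₀)
    (hK : Fintype.card K = q₀ ^ r) (hk : ∀ x : K, x ∈ k ↔ x ^ q₀ = x) :
    Module.finrank k K = r := by
  have h := Module.natCard_eq_pow_finrank (K := k) (V := K)
  rw [card_fixed_subfield_s16 k q₀ r hq hK hk, Nat.card_eq_fintype_card, hK] at h
  exact (Nat.pow_right_injective hq h).symm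

variable {n : ℕ}

theorem finrank_span_range_le {ℓ : ℕ} (lam : Fin ℓ → K) (u : Fin ℓ → Fin n → K)
    (hu : ∀ i j, u i j ∈ k) :
    Module.finrank k (Submodule.span k (Set.range (∑ i, lam i • u i))) ≤ ℓ := by
  have hle : Submodule.span k (Set.range (∑ i, lam i • u i)) ≤
      Submodule.span k (Set.range lam) := by
    rw [Submodule.span_le]
    rintro _ ⟨j, rfl⟩
    rw [Finset.sum_apply]
    refine Submodule.sum_mem _ fun i _ => ?_
    have : (lam i • u i) j = (⟨u i j, hu i j⟩ : k) • lam i := mul_comm _ _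
    rw [this]
    exact Submodule.smul_mem _ _ (Submodule.subset_span ⟨i, rfl⟩)
  calc _ ≤ Module.finrank k (Submodule.span k (Set.range lam)) := Submodule.finrank_mono hle
    _ ≤ Fintype.card (Fin ℓ) := finrank_range_le_card lam
    _ = ℓ := Fintype.card_fin ℓ

theorem exists_decomposition (w : Fin n → K) :
    ∃ (lam : Fin (Module.finrank k (Submodule.span k (Set.range w))) → K)
      (u : Fin (Module.finrank k (Submodule.span k (Set.range w))) → Fin n → K),
      (∀ i, u i ≠ 0 ∧ ∀ j, u i j ∈ k) ∧ w = ∑ i, lam i • u i := by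
  set D := Submodule.span k (Set.range w) with hD
  let b := Module.finBasis k D
  let ww : Fin n → D := fun j => ⟨w j, Submodule.subset_span ⟨j, rfl⟩⟩
  refine ⟨fun i => b i, fun i j => b.coord i (ww j), fun i => ⟨?_, fun j => SetLike.coe_mem _⟩, ?_⟩
  · intro h0
    -- The coordinate functional would vanish on all of `D`, contradicting its value on `b i`.
    have hker : ∀ (x : K) (hx : x ∈ Submodule.span k (Set.range w)),
        b.coord i (⟨x, hx⟩ : D) = 0 := by
      intro x hx
      induction hx using Submodule.span_induction with
      | mem x hx =>
        obtain ⟨j, rfl⟩ := hx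
        exact Subtype.ext (congrFun h0 j)
      | zero => exact map_zero (b.coord i)
      | add x y hx hy ihx ihy =>
        have := map_add (b.coord i) ⟨x, hx⟩ ⟨y, hy⟩
        rw [ihx, ihy, add_zero] at this
        exact this
      | smul a x hx ih =>
        have := map_smul (b.coord i) a ⟨x, hx⟩
        rw [ih, smul_zero] at this
        exact this
    have h1 := hker (b i) (b i).2
    simp at h1
  · funext j
    have h := congrArg (Subtype.val) (b.sum_repr (ww j))
    rw [Finset.sum_apply]
    simp only [AddSubmonoidClass.coe_finsetSum] at h
    rw [← show ((ww j : D) : K) = w j from rfl, ← h]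
    exact Finset.sum_congr rfl fun i _ => mul_comm _ _

theorem finrank_span_add_le (x y : Fin n → K) :
    Module.finrank k (Submodule.span k (Set.range (x + y))) ≤
      Module.finrank k (Submodule.span k (Set.range x)) +
        Module.finrank k (Submodule.span k (Set.range y)) := by
  refine le_trans (Submodule.finrank_mono ?_) (Submodule.finrank_add_le_finrank_add_finrank _ _)
  rw [Submodule.span_le]
  rintro _ ⟨j, rfl⟩
  exact Submodule.add_mem_sup (Submodule.subset_span ⟨j, rfl⟩) (Submodule.subset_span ⟨j, rfl⟩)

theorem exists_large_finrank (m : ℕ) (hmn : m ≤ n) (hm : m ≤ Module.finrank k K) :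
    ∃ w : Fin n → K, m ≤ Module.finrank k (Submodule.span k (Set.range w)) := by
  let b := Module.finBasis k K
  let v : Fin m → K := fun i => b (Fin.castLE hm i)
  have hv : LinearIndependent k v :=
    b.linearIndependent.comp _ (Fin.castLE_injective hm)
  refine ⟨fun j => if h : (j : ℕ) < m then v ⟨j, h⟩ else 0, ?_⟩
  have h1 := finrank_span_eq_card hv
  rw [Fintype.card_fin] at h1
  refine h1.symm.le.trans (Submodule.finrank_mono (Submodule.span_mono ?_))
  rintro _ ⟨i, rfl⟩
  exact ⟨Fin.castLE hmn i, by simp⟩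

variable {k} {Γ : SimpleGraph (Fin n → K)}

theorem edist_le_of_sub_eq_sum
    (hΓ : ∀ x y, Γ.Adj x y ↔ ∃ (lam : K) (u : Fin n → K), lam ≠ 0 ∧ u ≠ 0 ∧
      (∀ i, u i ∈ k) ∧ x - y = lam • u)
    {ℓ : ℕ} (lam : Fin ℓ → K) (u : Fin ℓ → Fin n → K)
    (hu : ∀ i j, u i j ∈ k) (x y : Fin n → K) (h : x - y = ∑ i, lam i • u i) :
    Γ.edist x y ≤ ℓ := by
  induction ℓ generalizing x with
  | zero =>
    have : x = y := by simpa [sub_eq_zero] using h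
    simp [this]
  | succ ℓ ih =>
    rw [Fin.sum_univ_succ] at h
    have h2 := ih (fun i => lam i.succ) (fun i => u i.succ) (fun i j => hu _ j)
      (x - lam 0 • u 0) (by rw [sub_right_comm, h]; simp)
    have h1 : Γ.edist x (x - lam 0 • u 0) ≤ 1 := by
      rw [SimpleGraph.edist_le_one_iff_adj_or_eq]
      by_cases h0 : lam 0 • u 0 = 0
      · right; rw [h0, sub_zero]
      · left
        rw [smul_eq_zero, not_or] at h0
        exact (hΓ _ _).2 ⟨lam 0, u 0, h0.1, h0.2, hu 0, by simp⟩
    calc Γ.edist x y ≤ _ := SimpleGraph.edist_triangle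
      _ ≤ 1 + (ℓ : ℕ∞) := add_le_add h1 h2
      _ = ((ℓ + 1 : ℕ) : ℕ∞) := by push_cast; rw [add_comm]

theorem finrank_span_sub_le_length
    (hΓ : ∀ x y, Γ.Adj x y ↔ ∃ (lam : K) (u : Fin n → K), lam ≠ 0 ∧ u ≠ 0 ∧
      (∀ i, u i ∈ k) ∧ x - y = lam • u)
    {x y : Fin n → K} (p : Γ.Walk x y) :
    Module.finrank k (Submodule.span k (Set.range (x - y))) ≤ p.length := by
  induction p with
  | nil =>
    simp
  | cons h p ih =>
    rename_i a b c
    obtain ⟨lam, u, -, -, hu, e⟩ := (hΓ _ _).1 h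
    have h1 := finrank_span_range_le k (fun _ : Fin 1 => lam) (fun _ => u) (fun _ => hu)
    rw [Fin.sum_univ_one, ← e] at h1
    have h2 := finrank_span_add_le k (a - b) (b - c)
    rw [sub_add_sub_cancel] at h2
    rw [SimpleGraph.Walk.length_cons]
    omega

theorem ediam_eq
    (hΓ : ∀ x y, Γ.Adj x y ↔ ∃ (lam : K) (u : Fin n → K), lam ≠ 0 ∧ u ≠ 0 ∧
      (∀ i, u i ∈ k) ∧ x - y = lam • u) :
    Γ.ediam = (min n (Module.finrank k K) : ℕ) := by
  apply le_antisymm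
  · refine SimpleGraph.ediam_le_of_edist_le fun x y => ?_
    obtain ⟨lam, u, hu, e⟩ := exists_decomposition k (x - y)
    refine (edist_le_of_sub_eq_sum hΓ lam u (fun i => (hu i).2) x y e).trans ?_
    have h1 := finrank_range_le_card (R := k) (x - y)
    rw [Fintype.card_fin] at h1
    exact_mod_cast le_min h1 (Submodule.finrank_le _)
  · obtain ⟨w, hw⟩ := exists_large_finrank (n := n) k _ (min_le_left n (Module.finrank k K))
      (min_le_right _ _)
    refine le_trans ?_ (SimpleGraph.edist_le_ediam (u := w) (v := 0))
    rw [SimpleGraph.edist_eq_sInf]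
    refine le_sInf ?_
    rintro _ ⟨p, rfl⟩
    have h := finrank_span_sub_le_length hΓ p
    rw [sub_zero] at h
    exact Nat.cast_le.2 (hw.trans h)

end Helpers

/-- For a nonzero `w ∈ K^n`, the least positive `ℓ` such that `w` is a sum of `ℓ`
terms `λᵢ • uᵢ` with `λᵢ ∈ K` and `uᵢ` nonzero vectors with coordinates in the
subfield `k`, equals `c(w) = dim_k D_w`. Consequently the Cayley graph of `K^n`
with connection set `{λ • u : λ ≠ 0, u ∈ k^n \ {0}}` has diameter `min n r`. -/
theorem stmt_16 (p l r : ℕ) (hp : p.Prime) (hl : 0 < l) (hr : r.Prime)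
    (q₀ : ℕ) (hq₀ : q₀ = p ^ l)
    (K : Type*) [Field K] [Fintype K] (hK : Fintype.card K = q₀ ^ r)
    (k : Subfield K) (hk : ∀ x : K, x ∈ k ↔ x ^ q₀ = x)
    (n : ℕ) (hn : 0 < n)
    (w : Fin n → K) (hw : w ≠ 0)
    (S : Set (Fin n → K))
    (hS : S = {x | ∃ (lam : K) (u : Fin n → K), lam ≠ 0 ∧ u ≠ 0 ∧
      (∀ i, u i ∈ k) ∧ x = lam • u})
    (Γ : SimpleGraph (Fin n → K))
    (hΓ : ∀ x y, Γ.Adj x y ↔ x - y ∈ S) :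
    IsLeast {ℓ : ℕ | 0 < ℓ ∧ ∃ (lam : Fin ℓ → K) (u : Fin ℓ → (Fin n → K)),
        (∀ i, u i ≠ 0 ∧ ∀ j, u i j ∈ k) ∧ w = ∑ i, lam i • u i}
      (Module.finrank (↥k) ↥(Submodule.span (↥k) (Set.range w))) ∧
    Γ.ediam = (min n r : ℕ) := by
  subst hS
  have hq : 1 < q₀ := hq₀ ▸ Nat.one_lt_pow hl.ne' hp.one_lt
  refine ⟨⟨⟨?_, exists_decomposition k w⟩, ?_⟩, ?_⟩
  · rw [Module.finrank_pos_iff_exists_ne_zero]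
    obtain ⟨j, hj⟩ := Function.ne_iff.1 hw
    exact ⟨⟨w j, Submodule.subset_span ⟨j, rfl⟩⟩, fun h => hj (congrArg Subtype.val h)⟩
  · rintro ℓ ⟨-, lam, u, hu, rfl⟩
    exact finrank_span_range_le k lam u fun i => (hu i).2
  · rw [ediam_eq (k := k) hΓ, finrank_fixed_subfield k q₀ r hq hK hk]
end

section
/- Let c be a positive integer with 2c < min(n, r), and let S be any subset of K^n such that c(x) ≤ c for every x ∈ S, where c(x) = dim_k D_x. Then S ∪ (S + S) ≠ K^n; that is, there exists a vector w ∈ K^n which is neither in S nor a sum of two elements of S. In particular, any Cayley graph Cay(K^n, S) with such a connection set S has diameter greater than 2. -/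
open Pointwise

/-!
The function `c(v) = dim_k D_v` is subadditive, since `D_{x+y} ⊆ D_x + D_y`; hence every element of
`S ∪ (S + S)`, and the zero vector, has `c`-value at most `2c`. On the other hand `k` consists of
roots of `X ^ q₀ - X`, so `|k| ≤ q₀` and `[K : k] ≥ r > 2c`. Since also `n > 2c`, a vector whose
first `2c + 1` coordinates are `k`-linearly independent exists, and its `c`-value exceeds `2c`.
Such a vector is at distance greater than `2` from `0` in the Cayley graph.
-/

/-- Subadditivity of `v ↦ dim_k D_v`. -/
lemma finrank_span_range_add_le {F K : Type*} [Field F] [Field K] [Algebra F K]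
    [FiniteDimensional F K] {n : ℕ} (x y : Fin n → K) :
    Module.finrank F (Submodule.span F (Set.range (x + y))) ≤
      Module.finrank F (Submodule.span F (Set.range x)) +
        Module.finrank F (Submodule.span F (Set.range y)) := by
  refine le_trans (Submodule.finrank_mono ?_) (Submodule.finrank_add_le_finrank_add_finrank _ _)
  rw [Submodule.span_le]
  rintro _ ⟨i, rfl⟩
  exact Submodule.add_mem_sup (Submodule.subset_span ⟨i, rfl⟩) (Submodule.subset_span ⟨i, rfl⟩)

lemma exists_finrank_span_range_ge {F K : Type*} [Field F] [Field K] [Algebra F K]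
    [FiniteDimensional F K] {n m : ℕ} (hn : m ≤ n) (hm : m ≤ Module.finrank F K) :
    ∃ w : Fin n → K, m ≤ Module.finrank F (Submodule.span F (Set.range w)) := by
  have hf : LinearIndependent F (Module.finBasis F K ∘ Fin.castLE hm) :=
    (Module.finBasis F K).linearIndependent.comp _ (Fin.castLE_injective hm)
  set f := Module.finBasis F K ∘ Fin.castLE hm
  refine ⟨fun i => if h : (i : ℕ) < m then f ⟨i, h⟩ else 0, ?_⟩
  calc m = Module.finrank F (Submodule.span F (Set.range f)) := by
        rw [finrank_span_eq_card hf, Fintype.card_fin]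
    _ ≤ _ := by
        refine Submodule.finrank_mono (Submodule.span_mono ?_)
        rintro _ ⟨i, rfl⟩
        exact ⟨Fin.castLE hn i, by simp⟩

/-- A subfield all of whose elements satisfy `x ^ q₀ = x` has at most `q₀` elements, so a
field of order `q₀ ^ r` has degree at least `r` over it. -/
lemma le_finrank_of_pow_eq {K : Type*} [Field K] [Fintype K] {q₀ r : ℕ} (hq : 1 < q₀)
    (hK : Fintype.card K = q₀ ^ r) (k : Subfield K) (hk : ∀ x ∈ k, x ^ q₀ = x) :
    r ≤ Module.finrank k K := by
  classical
  have hne : (Polynomial.X ^ q₀ - Polynomial.X : Polynomial K) ≠ 0 :=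
    FiniteField.X_pow_card_sub_X_ne_zero K hq
  have hcard : Nat.card k ≤ q₀ := by
    have hsub : (k : Set K) ⊆
        ((Polynomial.X ^ q₀ - Polynomial.X : Polynomial K).roots.toFinset : Set K) := by
      intro x hx
      simp [hne, hk x hx]
    have h1 := Set.ncard_le_ncard hsub (Finset.finite_toSet _)
    rw [Set.ncard_coe_finset] at h1
    calc Nat.card k = (k : Set K).ncard := rfl
      _ ≤ _ := h1
      _ ≤ _ := Multiset.toFinset_card_le _
      _ ≤ _ := Polynomial.card_roots' _
      _ = q₀ := FiniteField.X_pow_card_sub_X_natDegree_eq K hq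
  have h2 : Nat.card K = Nat.card k ^ Module.finrank k K := Module.natCard_eq_pow_finrank
  rw [Nat.card_eq_fintype_card, hK] at h2
  exact (Nat.pow_le_pow_iff_right hq).1 (h2.le.trans (Nat.pow_le_pow_left hcard _))

/-- If `2c < min n r` and `S ⊆ K^n` satisfies `c(x) ≤ c` for all `x ∈ S`, then
`S ∪ (S + S) ≠ K^n`; in particular any Cayley graph `Cay(K^n, S)` has diameter
greater than `2`. -/
theorem stmt_18 (p l r : ℕ) (hp : p.Prime) (hl : 0 < l) (hr : r.Prime)
    (q₀ : ℕ) (hq₀ : q₀ = p ^ l)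
    (K : Type*) [Field K] [Fintype K] (hK : Fintype.card K = q₀ ^ r)
    (k : Subfield K) (hk : ∀ x : K, x ∈ k ↔ x ^ q₀ = x)
    (n : ℕ) (hn : 0 < n)
    (c : ℕ) (hc : 0 < c) (hcr : 2 * c < min n r)
    (S : Set (Fin n → K))
    (hS : ∀ x ∈ S, Module.finrank (↥k) ↥(Submodule.span (↥k) (Set.range x)) ≤ c) :
    S ∪ (S + S) ≠ Set.univ ∧
      ∀ Γ : SimpleGraph (Fin n → K), (∀ x y, Γ.Adj x y ↔ x - y ∈ S) →
        2 < Γ.ediam := by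
  have hq : 1 < q₀ := hq₀ ▸ Nat.one_lt_pow hl.ne' hp.one_lt
  have hd := le_finrank_of_pow_eq hq hK k fun x hx => (hk x).1 hx
  obtain ⟨hcn, hcr⟩ := lt_min_iff.1 hcr
  obtain ⟨w, hw⟩ := exists_finrank_span_range_ge (F := k) (K := K) (n := n) (m := 2 * c + 1)
    hcn (by omega)
  have hwS : w ∉ S := fun h => by have := hS w h; omega
  have hwSS : ∀ x ∈ S, ∀ y ∈ S, x + y ≠ w := by
    rintro x hx y hy rfl
    have := finrank_span_range_add_le (F := k) x y
    have := hS x hx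
    have := hS y hy
    omega
  have hw0 : w ≠ 0 := by
    rintro rfl
    have h0 : Submodule.span k (Set.range (0 : Fin n → K)) = ⊥ := by
      rw [Submodule.span_eq_bot]
      rintro _ ⟨i, rfl⟩
      rfl
    rw [h0, finrank_bot] at hw
    omega
  refine ⟨fun h => ?_, fun Γ hΓ => ?_⟩
  · rcases (h ▸ Set.mem_univ w : w ∈ S ∪ (S + S)) with h | ⟨x, hx, y, hy, h⟩
    · exact hwS h
    · exact hwSS x hx y hy h
  · by_contra! hle
    have hdist : Γ.edist w 0 ≤ 2 := SimpleGraph.edist_le_ediam.trans hle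
    obtain ⟨P, hP⟩ := SimpleGraph.exists_walk_of_edist_ne_top
      (ne_top_of_le_ne_top (by simp) hdist)
    rw [← hP] at hdist
    have hlen : P.length ≤ 2 := by exact_mod_cast hdist
    clear hP hdist
    generalize hz : (0 : Fin n → K) = z at P
    match P, hlen with
    | .nil, _ => exact hw0 hz.symm
    | .cons h .nil, _ => exact hwS (by simpa [← hz] using (hΓ _ _).1 h)
    | .cons h (.cons h' .nil), _ =>
      exact hwSS _ ((hΓ _ _).1 h) _ ((hΓ _ _).1 h') (by simp [← hz])
    | .cons _ (.cons _ (.cons _ _)), h => simp at h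
end

section
/- Let q be an odd prime power and let β, γ ∈ 𝔽_q satisfy β² + γ² = −1. Let a and c be the invertible 2×2 matrices over 𝔽_q given by a = [[0, 1], [−1, 0]] and c = [[β, γ], [γ, −β]], and let R be the subgroup of GL(2, q) generated by a and c. For a nonzero vector v ∈ 𝔽_q², let S = {λ·(v·g) : λ ∈ 𝔽_q \ {0}, g ∈ R} (row vector times matrix). Then every vector of 𝔽_q² lies in S ∪ (S + S); in particular, the Cayley graph Cay(𝔽_q², S) has diameter at most 2. -/
/-!
If `S` is closed under nonzero scalars and contains two linearly independent vectors `v` and `u`,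
then every `w = p • v + r • u` lies in `S` (exactly one coefficient nonzero) or in `S + S`
(otherwise, using `0 = v + (-v)`). Here `u` can be `v·a` or `v·c`: for `v = (x, y)` the determinants
of the pairs `(v, v·a)` and `(v, v·c)` are `x² + y²` and `γ(x² - y²) - 2βxy`, and if both vanished
with `v ≠ 0`, then `γx = βy`, whence `(β² + γ²)x² = 0`, contradicting `β² + γ² = -1`.
-/

open Matrix Pointwise

/-- A set closed under nonzero scalars and containing two independent vectors of `F²`
covers `F²` by at most two summands. -/
lemma mem_union_add_of_det_ne_zero {F : Type*} [Field F] {S : Set (Fin 2 → F)}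
    (hsmul : ∀ l : F, l ≠ 0 → ∀ s ∈ S, l • s ∈ S) {v u : Fin 2 → F} (hv : v ∈ S) (hu : u ∈ S)
    (hd : v 0 * u 1 - v 1 * u 0 ≠ 0) (w : Fin 2 → F) : w ∈ S ∪ (S + S) := by
  -- Cramer's rule
  obtain ⟨p, r, hw⟩ : ∃ p r : F, w = p • v + r • u := by
    refine ⟨(w 0 * u 1 - w 1 * u 0) / (v 0 * u 1 - v 1 * u 0),
      (v 0 * w 1 - v 1 * w 0) / (v 0 * u 1 - v 1 * u 0), ?_⟩
    ext i
    fin_cases i <;>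
      simp only [Fin.zero_eta, Fin.mk_one, Pi.add_apply, Pi.smul_apply, smul_eq_mul] <;>
      rw [div_mul_eq_mul_div, div_mul_eq_mul_div, ← add_div, eq_div_iff hd] <;> ring
  by_cases hp : p = 0
  · by_cases hr : r = 0
    · refine Or.inr ⟨v, hv, (-1 : F) • v, hsmul _ (by simp) v hv, ?_⟩
      simp [hw, hp, hr]
    · exact Or.inl (by simpa [hw, hp] using hsmul r hr u hu)
  · by_cases hr : r = 0
    · exact Or.inl (by simpa [hw, hr] using hsmul p hp v hv)
    · exact Or.inr ⟨p • v, hsmul p hp v hv, r • u, hsmul r hr u hu, hw.symm⟩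

/-- Let `q` be odd, `β² + γ² = -1`, and `R ≤ GL(2,q)` the subgroup generated by
`a = [[0,1],[-1,0]]` and `c = [[β,γ],[γ,-β]]`. For a nonzero `v ∈ F_q²` and
`S = {λ·(v·g) : λ ≠ 0, g ∈ R}`, every vector of `F_q²` lies in `S ∪ (S + S)`;
in particular `Cay(F_q², S)` has diameter at most `2`. -/
theorem stmt_19 (F : Type*) [Field F] [Fintype F] (hodd : Odd (Fintype.card F))
    (β γ : F) (hβγ : β ^ 2 + γ ^ 2 = -1)
    (a c : GL (Fin 2) F)
    (ha : (a : Matrix (Fin 2) (Fin 2) F) = !![0, 1; -1, 0])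
    (hc : (c : Matrix (Fin 2) (Fin 2) F) = !![β, γ; γ, -β])
    (v : Fin 2 → F) (hv : v ≠ 0)
    (S : Set (Fin 2 → F))
    (hS : S = {w | ∃ (lam : F) (g : GL (Fin 2) F), lam ≠ 0 ∧
        g ∈ Subgroup.closure {a, c} ∧
        w = lam • Matrix.vecMul v (g : Matrix (Fin 2) (Fin 2) F)})
    (Γ : SimpleGraph (Fin 2 → F))
    (hΓ : ∀ x y, Γ.Adj x y ↔ x - y ∈ S) :
    (∀ w : Fin 2 → F, w ∈ S ∪ (S + S)) ∧ Γ.ediam ≤ 2 := by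
  have h2 : (2 : F) ≠ 0 := by
    refine Ring.two_ne_zero fun h => ?_
    have := FiniteField.even_card_iff_char_two.mp h
    rw [Nat.odd_iff] at hodd
    omega
  have hsmul : ∀ l : F, l ≠ 0 → ∀ s ∈ S, l • s ∈ S := by
    subst hS
    rintro l hl _ ⟨m, g, hm, hg, rfl⟩
    exact ⟨l * m, g, mul_ne_zero hl hm, hg, by rw [smul_smul]⟩
  have horb : ∀ g ∈ Subgroup.closure {a, c}, vecMul v (g : Matrix (Fin 2) (Fin 2) F) ∈ S := by
    subst hS
    exact fun g hg => ⟨1, g, one_ne_zero, hg, by simp⟩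
  have hvS : v ∈ S := by simpa using horb 1 (one_mem _)
  have haS := horb a (Subgroup.subset_closure (by simp))
  have hcS := horb c (Subgroup.subset_closure (by simp))
  have hcover : ∀ w : Fin 2 → F, w ∈ S ∪ (S + S) := by
    by_cases hda : v 0 * v 0 + v 1 * v 1 = 0
    · refine mem_union_add_of_det_ne_zero hsmul hvS hcS ?_
      rw [hc]
      simp only [vecMul, dotProduct, Fin.sum_univ_two, of_apply, cons_val', cons_val_zero,
        cons_val_one, cons_val_fin_one]
      intro hdc
      have hx : v 0 ≠ 0 := by
        intro hx
        apply hv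
        have hy : v 1 = 0 := by simpa [hx] using hda
        ext i
        fin_cases i <;> simp [hx, hy]
      have h : γ * v 0 = β * v 1 := by
        apply mul_left_cancel₀ (mul_ne_zero h2 hx)
        linear_combination hdc + γ * hda
      have h0 : v 0 ^ 2 = 0 := by
        linear_combination v 0 ^ 2 * hβγ - (γ * v 0 + β * v 1) * h - β ^ 2 * hda
      exact hx (pow_eq_zero_iff two_ne_zero |>.mp h0)
    · refine mem_union_add_of_det_ne_zero hsmul hvS haS ?_
      rw [ha]
      simpa [vecMul, dotProduct, Fin.sum_univ_two] using hda
  refine ⟨hcover, SimpleGraph.ediam_le_of_edist_le fun x y => ?_⟩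
  rcases hcover (x - y) with h | ⟨s, hs, t, ht, hst⟩
  · exact ((hΓ x y).mpr h).toWalk.edist_le.trans (by simp)
  · have hst' : s + t = x - y := hst
    have h1 : Γ.Adj x (y + t) := (hΓ _ _).mpr (by
      rwa [show x - (y + t) = s by rw [← sub_sub, ← hst']; simp])
    have h2 : Γ.Adj (y + t) y := (hΓ _ _).mpr (by simpa using ht)
    exact (h1.toWalk.append h2.toWalk).edist_le.trans (by simp)
end
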